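/- Let κ > 0. (a) If ψ ≤ ψ↓(κ), then almost surely liminf_{n→∞} ξ⁽²⁾_{n,ψ,κ} > 0. (b) If ψ > ψ↓(κ), then almost surely lim_{n→∞} ξ⁽²⁾_{n,ψ,κ} = T(ψ,κ); moreover the minimizer θ̂⁽²⁾_{n,ψ,κ} of the optimization defining ξ⁽²⁾_{n,ψ,κ} is (eventually) uniquely defined and satisfies, almost surely, ⟨θ̂⁽²⁾_{n,ψ,κ}, Λ_n^{1/2}w⟩ → c₁(ψ,κ) and ‖Λ_n^{1/2}θ̂⁽²⁾_{n,ψ,κ}‖₂ → (c₁(ψ,κ)² + c₂(ψ,κ)²)^{1/2}. -/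

import Mathlib

open MeasureTheory ProbabilityTheory Real Filter Set Topology

noncomputable section

namespace MaxMargin

/-- The standard Gaussian measure on `ℝ`. -/
def stdG : Measure ℝ := gaussianReal 0 1

/-- The function `F_κ(c₁,c₂) = (E[((κ − c₁·Y·G − c₂·Z)₊)²])^{1/2}` where `G, Z` are independent
standard Gaussians and, conditionally on `G`, `Y ∈ {+1,−1}` with `P(Y = +1 | G) = f(G)`. -/
def Fk (f : ℝ → ℝ) (κ c₁ c₂ : ℝ) : ℝ :=
  Real.sqrt (∫ g, ∫ z,
    (f g * (max (κ - c₁ * g - c₂ * z) 0) ^ 2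
      + (1 - f g) * (max (κ + c₁ * g - c₂ * z) 0) ^ 2) ∂stdG ∂stdG)

/-- Non-degeneracy of `f`: the variable `T = Y·G` satisfies `P(T < x) > 0` and `P(T > x) > 0`
for every `x ∈ ℝ`. -/
def NonDeg (f : ℝ → ℝ) : Prop :=
  ∀ x : ℝ,
    (0 < ∫ g, (f g * (if g < x then (1:ℝ) else 0)
          + (1 - f g) * (if -g < x then (1:ℝ) else 0)) ∂stdG) ∧
    (0 < ∫ g, (f g * (if x < g then (1:ℝ) else 0)
          + (1 - f g) * (if x < -g then (1:ℝ) else 0)) ∂stdG)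


/-- Points of `ℝ³` carrying the coordinates `(G, X, W)`. -/
abbrev Pt : Type := ℝ × ℝ × ℝ

/-- First coordinate `G`. -/
def Gc : Pt → ℝ := fun q => q.1

/-- Second coordinate `X`. -/
def Xc : Pt → ℝ := fun q => q.2.1

/-- Third coordinate `W`. -/
def Wc : Pt → ℝ := fun q => q.2.2

/-- The inner product `⟨h₁,h₂⟩_P = E_P[h₁h₂]`. -/
def ip (P : Measure Pt) (h₁ h₂ : Pt → ℝ) : ℝ := ∫ q, h₁ q * h₂ q ∂P

/-- The norm `‖h‖_P = ⟨h,h⟩_P^{1/2}`. -/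
def pnorm (P : Measure Pt) (h : Pt → ℝ) : ℝ := Real.sqrt (ip P h h)

/-- Projection onto the orthogonal complement of `W`: `Π_{W⊥}(h) = h − ⟨h,W⟩_P·W`. -/
def projW (P : Measure Pt) (h : Pt → ℝ) : Pt → ℝ := fun q => h q - ip P h Wc * Wc q

/-- Partial derivative of `F_κ` in its first argument. -/
def d1F (f : ℝ → ℝ) (κ c₁ c₂ : ℝ) : ℝ := deriv (fun t => Fk f κ t c₂) c₁

/-- Partial derivative of `F_κ` in its second argument. -/
def d2F (f : ℝ → ℝ) (κ c₁ c₂ : ℝ) : ℝ := deriv (fun t => Fk f κ c₁ t) c₂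

/-- `ψ*(0) = min_{c ∈ ℝ} F₀(c,1)²`. -/
def psiStar0 (f : ℝ → ℝ) : ℝ := ⨅ c : ℝ, (Fk f 0 c 1) ^ 2

/-- The functional `𝓡_{ψ,κ,P}(h) = ψ^{−1/2}·F_κ(⟨h, X^{1/2}W⟩_P, ‖Π_{W⊥}(X^{1/2}h)‖_P)
+ ⟨h, X^{1/2}·Π_{W⊥}(G)⟩_P`. -/
def Rfun (f : ℝ → ℝ) (P : Measure Pt) (ψ κ : ℝ) (h : Pt → ℝ) : ℝ :=
  (Real.sqrt ψ)⁻¹ *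
      Fk f κ (ip P h (fun q => Real.sqrt (Xc q) * Wc q))
        (pnorm P (projW P (fun q => Real.sqrt (Xc q) * h q)))
    + ip P h (fun q => Real.sqrt (Xc q) * projW P Gc q)

/-- `ζ(P) = ‖X^{−1/2}W‖_P^{−1}`. -/
def zetaP (P : Measure Pt) : ℝ := (pnorm P (fun q => (Real.sqrt (Xc q))⁻¹ * Wc q))⁻¹

/-- `ζ = (E_μ[X⁻¹W²])^{−1/2}` for `(X,W) ~ μ`. -/
def zetaMu (μ : Measure (ℝ × ℝ)) : ℝ := (Real.sqrt (∫ q, (q.1)⁻¹ * q.2 ^ 2 ∂μ))⁻¹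

/-- `ω = (E_μ[(1 − ζ²X⁻¹)²W²])^{1/2}`. -/
def omegaMu (μ : Measure (ℝ × ℝ)) : ℝ :=
  Real.sqrt (∫ q, (1 - (zetaMu μ) ^ 2 * (q.1)⁻¹) ^ 2 * q.2 ^ 2 ∂μ)

/-- `ψ₊(κ)`. -/
def psiPlus (f : ℝ → ℝ) (μ : Measure (ℝ × ℝ)) (κ : ℝ) : ℝ :=
  if 0 < d1F f κ (zetaMu μ) 0 then 0
  else (d2F f κ (zetaMu μ) 0) ^ 2 - (omegaMu μ) ^ 2 * (d1F f κ (zetaMu μ) 0) ^ 2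

/-- `ψ₋(κ)`. -/
def psiMinus (f : ℝ → ℝ) (μ : Measure (ℝ × ℝ)) (κ : ℝ) : ℝ :=
  if 0 < d1F f κ (-(zetaMu μ)) 0 then 0
  else (d2F f κ (-(zetaMu μ)) 0) ^ 2 - (omegaMu μ) ^ 2 * (d1F f κ (-(zetaMu μ)) 0) ^ 2

/-- `ψ↓(κ) = max{ψ*(0), ψ₊(κ), ψ₋(κ)}`. -/
def psiDown (f : ℝ → ℝ) (μ : Measure (ℝ × ℝ)) (κ : ℝ) : ℝ :=
  max (max (psiStar0 f) (psiPlus f μ κ)) (psiMinus f μ κ)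

/-- The system of equations with expectations over `(X,W) ~ μ`:
with `A = ∂₁F_κ(c₁,c₂) − c₁c₂⁻¹∂₂F_κ(c₁,c₂)` and
`D = c₂⁻¹∂₂F_κ(c₁,c₂)·X^{1/2} + ψ^{1/2}·s·X^{−1/2}`,
`−c₁ = E_μ[A·W²·X^{1/2}/D]`, `c₁² + c₂² = E_μ[(ψX + A²W²X)/D²]`, `1 = E_μ[(ψ + A²W²)/D²]`. -/
def SolSysMu (f : ℝ → ℝ) (μ : Measure (ℝ × ℝ)) (ψ κ c₁ c₂ s : ℝ) : Prop :=
  (-c₁ = ∫ q, (d1F f κ c₁ c₂ - c₁ * c₂⁻¹ * d2F f κ c₁ c₂) * q.2 ^ 2 * Real.sqrt q.1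
      / (c₂⁻¹ * d2F f κ c₁ c₂ * Real.sqrt q.1 + Real.sqrt ψ * s * (Real.sqrt q.1)⁻¹) ∂μ)
  ∧ (c₁ ^ 2 + c₂ ^ 2 = ∫ q,
      (ψ * q.1 + (d1F f κ c₁ c₂ - c₁ * c₂⁻¹ * d2F f κ c₁ c₂) ^ 2 * q.2 ^ 2 * q.1)
      / (c₂⁻¹ * d2F f κ c₁ c₂ * Real.sqrt q.1 + Real.sqrt ψ * s * (Real.sqrt q.1)⁻¹) ^ 2 ∂μ)
  ∧ (1 = ∫ q,
      (ψ + (d1F f κ c₁ c₂ - c₁ * c₂⁻¹ * d2F f κ c₁ c₂) ^ 2 * q.2 ^ 2)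
      / (c₂⁻¹ * d2F f κ c₁ c₂ * Real.sqrt q.1 + Real.sqrt ψ * s * (Real.sqrt q.1)⁻¹) ^ 2 ∂μ)

/-- `T(ψ,κ) = ψ^{−1/2}(F_κ(c₁,c₂) − c₁∂₁F_κ(c₁,c₂) − c₂∂₂F_κ(c₁,c₂)) − s`. -/
def Tval (f : ℝ → ℝ) (ψ κ c₁ c₂ s : ℝ) : ℝ :=
  (Real.sqrt ψ)⁻¹ * (Fk f κ c₁ c₂ - c₁ * d1F f κ c₁ c₂ - c₂ * d2F f κ c₁ c₂) - s

/-- The Euclidean (ℓ²) norm of a finitely-indexed vector. -/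
def l2 {ι : Type*} [Fintype ι] (v : ι → ℝ) : ℝ := Real.sqrt (∑ i, v i ^ 2)

/-- Standard Gaussian measure on `ι → ℝ`. -/
def stdGaussianPi (ι : Type*) [Fintype ι] : Measure (ι → ℝ) :=
  Measure.pi fun _ : ι => stdG

/-- Projection of `v` orthogonal to the unit vector `w`: `Π_{w⊥}v = v − ⟨w,v⟩w`. -/
def projv {ι : Type*} [Fintype ι] (w v : ι → ℝ) : ι → ℝ :=
  fun j => v j - (∑ k, w k * v k) * w j

/-- Empirical measure of finitely many points of `ℝ²`. -/
def empMeas (P : ℕ) (pt : Fin P → ℝ × ℝ) : Measure (ℝ × ℝ) :=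
  ((P : ENNReal))⁻¹ • ∑ i : Fin P, Measure.dirac (pt i)

/-- The objective function of the problem defining `ξ⁽²⁾_{n,ψ,κ}`. -/
def obj2 (p : ℕ) (ψ κ : ℝ) (fρ : ℝ → ℝ) (Λ w : Fin p → ℝ) (g : Fin p → ℝ)
    (θ : Fin p → ℝ) : ℝ :=
  (Real.sqrt ψ)⁻¹ * Fk fρ κ (∑ j, Real.sqrt (Λ j) * w j * θ j)
      (l2 (projv w fun j => Real.sqrt (Λ j) * θ j))
    + (Real.sqrt (p : ℝ))⁻¹ * ∑ j, g j * projv w (fun j' => Real.sqrt (Λ j') * θ j') j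

lemma posPart_expand (x y : ℝ) :
    (max x 0) ^ 2 + 2 * max x 0 * y ≤ (max (x + y) 0) ^ 2 ∧
    (max (x + y) 0) ^ 2 ≤ (max x 0) ^ 2 + 2 * max x 0 * y + y ^ 2 := by
  rcases le_total x 0 with hx | hx <;> rcases le_total (x + y) 0 with hy | hy <;>
    simp only [max_eq_right, max_eq_left, hx, hy] <;> constructor <;> nlinarith [sq_nonneg y, sq_nonneg (x + y)]

section abs
variable {α : Type*} [MeasurableSpace α] (m : Measure α) [IsFiniteMeasure m] (T Z : α → ℝ)

def Qa (κ c₁ c₂ : ℝ) : ℝ := ∫ a, (max (κ - c₁ * T a - c₂ * Z a) 0) ^ 2 ∂m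

variable {m T Z}

lemma memY (hT : MemLp T 2 m) (hZ : MemLp Z 2 m) (κ c₁ c₂ : ℝ) :
    MemLp (fun a => κ - c₁ * T a - c₂ * Z a) 2 m :=
  ((memLp_const κ).sub (hT.const_mul c₁)).sub (hZ.const_mul c₂)

lemma memYp (hT : MemLp T 2 m) (hZ : MemLp Z 2 m) (κ c₁ c₂ : ℝ) :
    MemLp (fun a => max (κ - c₁ * T a - c₂ * Z a) 0) 2 m :=
  (memY hT hZ κ c₁ c₂).sup (memLp_const 0)

lemma Fa_bound (hT : MemLp T 2 m) (hZ : MemLp Z 2 m) (κ : ℝ)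
    (hpos : ∀ c₁ c₂, 0 < Qa m T Z κ c₁ c₂) (c₁ c₂ : ℝ) :
    ∃ a₁ a₂ K : ℝ, 0 ≤ K ∧ ∀ d₁ d₂ : ℝ,
      √(Qa m T Z κ c₁ c₂) + a₁ * (d₁ - c₁) + a₂ * (d₂ - c₂) ≤ √(Qa m T Z κ d₁ d₂) ∧
      √(Qa m T Z κ d₁ d₂) ≤ √(Qa m T Z κ c₁ c₂) + a₁ * (d₁ - c₁) + a₂ * (d₂ - c₂)
        + K * ((d₁ - c₁) ^ 2 + (d₂ - c₂) ^ 2) := by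
  set F := √(Qa m T Z κ c₁ c₂) with hF
  have hFpos : 0 < F := Real.sqrt_pos.2 (hpos _ _)
  have hFsq : F ^ 2 = Qa m T Z κ c₁ c₂ := Real.sq_sqrt (hpos _ _).le
  set y : α → ℝ := fun a => max (κ - c₁ * T a - c₂ * Z a) 0 with hy
  have hym : MemLp y 2 m := memYp hT hZ κ c₁ c₂
  have iyT : Integrable (fun a => y a * T a) m := hym.integrable_mul hT
  have iyZ : Integrable (fun a => y a * Z a) m := hym.integrable_mul hZ
  have iyy : Integrable (fun a => y a ^ 2) m := hym.integrable_sq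
  have iTT : Integrable (fun a => T a ^ 2) m := hT.integrable_sq
  have iZZ : Integrable (fun a => Z a ^ 2) m := hZ.integrable_sq
  have hQy : Qa m T Z κ c₁ c₂ = ∫ a, y a ^ 2 ∂m := rfl
  have nT : 0 ≤ ∫ a, T a ^ 2 ∂m := integral_nonneg fun a => sq_nonneg _
  have nZ : 0 ≤ ∫ a, Z a ^ 2 ∂m := integral_nonneg fun a => sq_nonneg _
  refine ⟨-(∫ a, y a * T a ∂m) / F, -(∫ a, y a * Z a ∂m) / F,
    ((∫ a, T a ^ 2 ∂m) + (∫ a, Z a ^ 2 ∂m)) / F, by positivity, fun d₁ d₂ => ?_⟩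
  set e₁ := d₁ - c₁ with he₁
  set e₂ := d₂ - c₂ with he₂
  set F' := √(Qa m T Z κ d₁ d₂) with hF'
  have hF'pos : 0 < F' := Real.sqrt_pos.2 (hpos _ _)
  have hF'sq : F' ^ 2 = Qa m T Z κ d₁ d₂ := Real.sq_sqrt (hpos _ _).le
  set y' : α → ℝ := fun a => max (κ - d₁ * T a - d₂ * Z a) 0 with hy'
  have hym' : MemLp y' 2 m := memYp hT hZ κ d₁ d₂
  have hQy' : Qa m T Z κ d₁ d₂ = ∫ a, y' a ^ 2 ∂m := rfl
  have iyy' : Integrable (fun a => y' a ^ 2) m := hym'.integrable_sq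
  have ixy : Integrable (fun a => y a * y' a) m := hym.integrable_mul hym'
  set I1 := ∫ a, y a * T a ∂m
  set I2 := ∫ a, y a * Z a ∂m
  constructor
  · -- lower
    have h1 : F ^ 2 - e₁ * I1 - e₂ * I2 ≤ ∫ a, y a * y' a ∂m := by
      rw [hFsq, hQy]
      have : (∫ a, y a ^ 2 ∂m) - e₁ * I1 - e₂ * I2
          = ∫ a, (y a ^ 2 - e₁ * (y a * T a) - e₂ * (y a * Z a)) ∂m := by
        have q1 : Integrable (fun a => y a ^ 2 - e₁ * (y a * T a)) m := iyy.sub (iyT.const_mul _)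
        rw [integral_sub q1 (iyZ.const_mul _),
          integral_sub iyy (iyT.const_mul _), integral_const_mul, integral_const_mul]
      rw [this]
      refine integral_mono ((iyy.sub (iyT.const_mul _)).sub (iyZ.const_mul _)) ixy fun a => ?_
      have hy0 : 0 ≤ y a := le_max_right _ _
      have h2 : κ - d₁ * T a - d₂ * Z a ≤ y' a := le_max_left _ _
      have h3 : y a ^ 2 = y a * (κ - c₁ * T a - c₂ * Z a) := by
        simp only [hy]
        rcases le_total (κ - c₁ * T a - c₂ * Z a) 0 with h | h
        · simp [max_eq_right h]
        · rw [max_eq_left h]; ring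
      have h4 := mul_le_mul_of_nonneg_left h2 hy0
      simp only [he₁, he₂]
      nlinarith [h3, h4]
    have h2 : ∫ a, y a * y' a ∂m ≤ F * F' := by
      have h0 : 0 ≤ ∫ a, (F * y' a - F' * y a) ^ 2 ∂m := integral_nonneg fun a => sq_nonneg _
      have : ∫ a, (F * y' a - F' * y a) ^ 2 ∂m
          = F ^ 2 * (∫ a, y' a ^ 2 ∂m) - 2 * F * F' * (∫ a, y a * y' a ∂m)
            + F' ^ 2 * (∫ a, y a ^ 2 ∂m) := by
        rw [← integral_const_mul, ← integral_const_mul, ← integral_const_mul, ← integral_sub,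
          ← integral_add]
        · congr 1; ext a; ring
        · exact (iyy'.const_mul _).sub (ixy.const_mul _)
        · exact iyy.const_mul _
        · exact iyy'.const_mul _
        · exact ixy.const_mul _
      rw [this, ← hQy, ← hQy', ← hFsq, ← hF'sq] at h0
      have hFF : 0 < F * F' := by positivity
      by_contra hcon
      push Not at hcon
      nlinarith [mul_lt_mul_of_pos_left hcon hFF]
    have h3 : F ^ 2 - e₁ * I1 - e₂ * I2 ≤ F * F' := h1.trans h2
    have : F + -I1 / F * e₁ + -I2 / F * e₂ = (F ^ 2 - e₁ * I1 - e₂ * I2) / F := by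
      field_simp; ring
    rw [this, div_le_iff₀ hFpos]; linarith
  · -- upper
    have h1 : F' ^ 2 ≤ F ^ 2 - 2 * e₁ * I1 - 2 * e₂ * I2
        + 2 * ((∫ a, T a ^ 2 ∂m) + (∫ a, Z a ^ 2 ∂m)) * (e₁ ^ 2 + e₂ ^ 2) := by
      rw [hFsq, hQy, hF'sq, hQy']
      have : (∫ a, y a ^ 2 ∂m) - 2 * e₁ * I1 - 2 * e₂ * I2 + (2 * e₁ ^ 2 * (∫ a, T a ^ 2 ∂m) + 2 * e₂ ^ 2 * (∫ a, Z a ^ 2 ∂m))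
          = ∫ a, ((y a ^ 2 - 2 * e₁ * (y a * T a) - 2 * e₂ * (y a * Z a)) +
            (2 * e₁ ^ 2 * (T a) ^ 2 + 2 * e₂ ^ 2 * (Z a) ^ 2)) ∂m := by
        have q1 : Integrable (fun a => y a ^ 2 - 2 * e₁ * (y a * T a)) m :=
          iyy.sub (iyT.const_mul _)
        have q2 : Integrable (fun a => y a ^ 2 - 2 * e₁ * (y a * T a) - 2 * e₂ * (y a * Z a)) m :=
          q1.sub (iyZ.const_mul _)
        have q3 : Integrable (fun a => 2 * e₁ ^ 2 * (T a) ^ 2 + 2 * e₂ ^ 2 * (Z a) ^ 2) m :=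
          (iTT.const_mul _).add (iZZ.const_mul _)
        rw [integral_add q2 q3, integral_sub q1 (iyZ.const_mul _),
          integral_sub iyy (iyT.const_mul _), integral_const_mul, integral_const_mul,
          integral_add (iTT.const_mul _) (iZZ.const_mul _), integral_const_mul, integral_const_mul]
      have h2 : ∫ a, y' a ^ 2 ∂m ≤ ∫ a, ((y a ^ 2 - 2 * e₁ * (y a * T a) - 2 * e₂ * (y a * Z a)) +
            (2 * e₁ ^ 2 * (T a) ^ 2 + 2 * e₂ ^ 2 * (Z a) ^ 2)) ∂m := by
        refine integral_mono iyy' (((iyy.sub (iyT.const_mul _)).sub (iyZ.const_mul _)).add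
          ((iTT.const_mul _).add (iZZ.const_mul _))) fun a => ?_
        have := (posPart_expand (κ - c₁ * T a - c₂ * Z a) (-(e₁ * T a) - e₂ * Z a)).2
        have e : κ - c₁ * T a - c₂ * Z a + (-(e₁ * T a) - e₂ * Z a) = κ - d₁ * T a - d₂ * Z a := by
          simp only [he₁, he₂]; ring
        rw [e] at this
        simp only [hy, hy']
        nlinarith [sq_nonneg (e₁ * T a - e₂ * Z a)]
      rw [← this] at h2
      nlinarith [mul_nonneg nT (sq_nonneg e₂), mul_nonneg nZ (sq_nonneg e₁)]
    set S := (∫ a, T a ^ 2 ∂m) + (∫ a, Z a ^ 2 ∂m)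
    have : F + -I1 / F * e₁ + -I2 / F * e₂ + S / F * (e₁ ^ 2 + e₂ ^ 2)
        = (F ^ 2 - e₁ * I1 - e₂ * I2 + S * (e₁ ^ 2 + e₂ ^ 2)) / F := by
      field_simp; ring
    rw [this, le_div_iff₀ hFpos]
    nlinarith [sq_nonneg (F - F')]

end abs

instance : IsProbabilityMeasure stdG := by unfold stdG; infer_instance

lemma memLp_id_stdG (p : ENNReal) (hp : p ≠ ⊤) : MemLp (fun x : ℝ => x) p stdG := by
  lift p to NNReal using hp
  exact memLp_id_gaussianReal p

lemma integral_id_stdG : ∫ z, z ∂stdG = 0 := by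
  unfold stdG; simp

lemma map_neg_stdG : stdG.map (fun x => -x) = stdG := by
  unfold stdG; rw [gaussianReal_map_neg]; simp

lemma integral_neg_stdG (φ : ℝ → ℝ) : ∫ z, φ (-z) ∂stdG = ∫ z, φ z ∂stdG := by
  conv_rhs => rw [← map_neg_stdG]
  exact ((MeasurableEquiv.neg ℝ).measurableEmbedding.integral_map φ).symm

/-- The law of `T = Y G`. -/
def nu (f : ℝ → ℝ) : Measure ℝ :=
  stdG.withDensity (fun x => ENNReal.ofReal (f x)) +
    (stdG.withDensity (fun x => ENNReal.ofReal (1 - f x))).map (fun x => -x)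

lemma nu_finite {f : ℝ → ℝ} (hf : Continuous f)
    (hf01 : ∀ x, f x ∈ Set.Icc (0:ℝ) 1) : IsFiniteMeasure (nu f) := by
  have h1 : IsFiniteMeasure (stdG.withDensity (fun x => ENNReal.ofReal (f x))) := by
    refine isFiniteMeasure_withDensity_ofReal ?_
    refine (Integrable.of_bound (C := 1) hf.aestronglyMeasurable (ae_of_all _ fun x => ?_)).2
    rw [Real.norm_eq_abs, abs_of_nonneg (hf01 x).1]; exact (hf01 x).2
  have h2 : IsFiniteMeasure (stdG.withDensity (fun x => ENNReal.ofReal (1 - f x))) := by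
    refine isFiniteMeasure_withDensity_ofReal ?_
    refine (Integrable.of_bound (C := 1) (f := fun x => 1 - f x)
      (continuous_const.sub hf).aestronglyMeasurable (ae_of_all _ fun x => ?_)).2
    rw [Real.norm_eq_abs, abs_of_nonneg (by linarith [(hf01 x).2])]; linarith [(hf01 x).1]
  unfold nu; infer_instance

lemma integrable_wd {u : ℝ → ℝ} (hu : Continuous u) (hu01 : ∀ x, u x ∈ Set.Icc (0:ℝ) 1)
    {φ : ℝ → ℝ} (h1 : Integrable φ stdG) :
    Integrable φ (stdG.withDensity (fun x => ENNReal.ofReal (u x))) ∧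
    ∫ t, φ t ∂(stdG.withDensity (fun x => ENNReal.ofReal (u x))) = ∫ g, u g * φ g ∂stdG := by
  constructor
  · rw [integrable_withDensity_iff_integrable_smul' (by fun_prop) (by simp)]
    simp_rw [ENNReal.toReal_ofReal (hu01 _).1, smul_eq_mul]
    refine h1.bdd_mul (c := 1) hu.aestronglyMeasurable (ae_of_all _ fun x => ?_)
    rw [Real.norm_eq_abs, abs_of_nonneg (hu01 x).1]; exact (hu01 x).2
  · rw [integral_withDensity_eq_integral_toReal_smul (by fun_prop) (by simp)]
    simp_rw [ENNReal.toReal_ofReal (hu01 _).1, smul_eq_mul]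

lemma int_nu {f : ℝ → ℝ} (hf : Continuous f)
    (hf01 : ∀ x, f x ∈ Set.Icc (0:ℝ) 1) {φ : ℝ → ℝ} (h1 : Integrable φ stdG) (h2 : Integrable (fun x => φ (-x)) stdG) :
    Integrable φ (nu f) ∧
      ∫ t, φ t ∂(nu f) = ∫ g, (f g * φ g + (1 - f g) * φ (-g)) ∂stdG := by
  obtain ⟨a1, a2⟩ := integrable_wd hf hf01 h1
  have hc : Continuous (fun x => 1 - f x) := continuous_const.sub hf
  have hc01 : ∀ x, (1 - f x) ∈ Set.Icc (0:ℝ) 1 := fun x =>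
    ⟨by linarith [(hf01 x).2], by linarith [(hf01 x).1]⟩
  obtain ⟨b1, b2⟩ := integrable_wd hc hc01 h2
  have hme : MeasurableEmbedding (fun x : ℝ => -x) := (MeasurableEquiv.neg ℝ).measurableEmbedding
  have b3 : Integrable φ ((stdG.withDensity (fun x => ENNReal.ofReal (1 - f x))).map (fun x => -x)) := by
    rw [hme.integrable_map_iff]; exact b1
  refine ⟨a1.add_measure b3, ?_⟩
  have e1 : Integrable (fun g => f g * φ g) stdG := by
    refine h1.bdd_mul (c := 1) hf.aestronglyMeasurable (ae_of_all _ fun x => ?_)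
    rw [Real.norm_eq_abs, abs_of_nonneg (hf01 x).1]; exact (hf01 x).2
  have e2 : Integrable (fun g => (1 - f g) * φ (-g)) stdG := by
    refine h2.bdd_mul (c := 1) hc.aestronglyMeasurable (ae_of_all _ fun x => ?_)
    rw [Real.norm_eq_abs, abs_of_nonneg (hc01 x).1]; exact (hc01 x).2
  unfold nu
  rw [integral_add_measure a1 b3, hme.integral_map, a2, b2, integral_add e1 e2]

lemma memT {f : ℝ → ℝ} (hf : Continuous f)
    (hf01 : ∀ x, f x ∈ Set.Icc (0:ℝ) 1) : MemLp (fun x : ℝ => x) 2 (nu f) := by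
  have := (memLp_id_stdG 2 (by simp)).integrable_sq
  rw [memLp_two_iff_integrable_sq (by fun_prop)]
  exact (int_nu hf hf01 this (by simpa using this)).1

lemma memT' {f : ℝ → ℝ} (hf : Continuous f)
    (hf01 : ∀ x, f x ∈ Set.Icc (0:ℝ) 1) : MemLp (fun q : ℝ × ℝ => q.1) 2 ((nu f).prod stdG) := by
  have := nu_finite hf hf01
  exact (memT hf hf01).comp_fst stdG

lemma memZ' {f : ℝ → ℝ} (hf : Continuous f)
    (hf01 : ∀ x, f x ∈ Set.Icc (0:ℝ) 1) : MemLp (fun q : ℝ × ℝ => q.2) 2 ((nu f).prod stdG) := by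
  have := nu_finite hf hf01
  exact (memLp_id_stdG 2 (by simp)).comp_snd (nu f)

lemma Fk_eq {f : ℝ → ℝ} (hf : Continuous f)
    (hf01 : ∀ x, f x ∈ Set.Icc (0:ℝ) 1) (κ c₁ c₂ : ℝ) :
    Fk f κ c₁ c₂ = √(Qa ((nu f).prod stdG) (fun q => q.1) (fun q => q.2) κ c₁ c₂) := by
  have := nu_finite hf hf01
  have hgT : MemLp (fun q : ℝ × ℝ => q.1) 2 (stdG.prod stdG) :=
    (memLp_id_stdG 2 (by simp)).comp_fst stdG
  have hgZ : MemLp (fun q : ℝ × ℝ => q.2) 2 (stdG.prod stdG) :=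
    (memLp_id_stdG 2 (by simp)).comp_snd stdG
  unfold Fk Qa
  congr 1
  rw [integral_prod _ (memYp (memT' hf hf01) (memZ' hf hf01) κ c₁ c₂).integrable_sq]
  have i1 := (memYp hgT hgZ κ c₁ c₂).integrable_sq.integral_prod_left
  have i2 := (memYp hgT hgZ κ (-c₁) c₂).integrable_sq.integral_prod_left
  have iz : ∀ a c₂ : ℝ, Integrable (fun z => (max (a - c₂ * z) 0) ^ 2) stdG := fun a c₂ =>
    ((((memLp_const a).sub ((memLp_id_stdG 2 (by simp)).const_mul c₂))).sup
      (memLp_const 0)).integrable_sq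
  rw [(int_nu hf hf01 i1 (by
    refine i2.congr (ae_of_all _ fun x => ?_)
    simp)).2]
  refine integral_congr_ae (ae_of_all _ fun g => ?_)
  simp only
  rw [integral_add ((iz _ _).const_mul _) ((iz _ _).const_mul _), integral_const_mul,
    integral_const_mul]
  simp

lemma Qa_pos {f : ℝ → ℝ} (hf : Continuous f)
    (hf01 : ∀ x, f x ∈ Set.Icc (0:ℝ) 1) (hnd : NonDeg f) {κ : ℝ} (hκ : 0 < κ) (c₁ c₂ : ℝ) :
    0 < Qa ((nu f).prod stdG) (fun q => q.1) (fun q => q.2) κ c₁ c₂ := by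
  have := nu_finite hf hf01
  unfold Qa
  have hI := (memYp (memT' hf hf01) (memZ' hf hf01) κ c₁ c₂).integrable_sq
  rw [integral_prod _ hI]
  have iz : ∀ a c₂ : ℝ, Integrable (fun z => (max (a - c₂ * z) 0) ^ 2) stdG := fun a c₂ =>
    ((((memLp_const a).sub ((memLp_id_stdG 2 (by simp)).const_mul c₂))).sup
      (memLp_const 0)).integrable_sq
  have hid : Integrable (fun z : ℝ => z) stdG := (memLp_id_stdG 1 (by simp)).integrable le_rfl
  have jensen : ∀ t : ℝ, (max (κ - c₁ * t) 0) ^ 2 ≤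
      ∫ z, (max (κ - c₁ * t - c₂ * z) 0) ^ 2 ∂stdG := by
    intro t
    have h1 : ∫ z, ((max (κ - c₁ * t) 0) ^ 2 + (-2 * max (κ - c₁ * t) 0 * c₂) * z) ∂stdG
        = (max (κ - c₁ * t) 0) ^ 2 := by
      rw [integral_add (integrable_const _) (hid.const_mul _), integral_const_mul,
        integral_id_stdG]; simp
    rw [← h1]
    refine integral_mono ((integrable_const _).add (hid.const_mul _)) (iz _ _) fun z => ?_
    have := (posPart_expand (κ - c₁ * t) (-(c₂ * z))).1
    simp only
    rw [← sub_eq_add_neg] at this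
    linarith
  have iT : Integrable (fun t => (max (κ - c₁ * t) 0) ^ 2) (nu f) :=
    (((memLp_const κ).sub ((memT hf hf01).const_mul c₁)).sup (memLp_const 0)).integrable_sq
  refine lt_of_lt_of_le ?_ (integral_mono iT hI.integral_prod_left jensen)
  -- positivity through non-degeneracy
  by_contra hcon
  have hz : ∫ t, (max (κ - c₁ * t) 0) ^ 2 ∂(nu f) = 0 :=
    le_antisymm (not_lt.1 hcon) (integral_nonneg fun _ => sq_nonneg _)
  rw [integral_eq_zero_iff_of_nonneg (fun _ => sq_nonneg _) iT] at hz
  have hz' : ∀ᵐ t ∂(nu f), κ - c₁ * t ≤ 0 := by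
    filter_upwards [hz] with t ht
    simpa using ht
  have ind : ∀ s : Set ℝ, MeasurableSet s → (∀ t ∈ s, 0 < κ - c₁ * t) →
      ∫ g, (f g * s.indicator 1 g + (1 - f g) * s.indicator 1 (-g)) ∂stdG = 0 := by
    intro s hs hst
    have b1 : Integrable (s.indicator (1 : ℝ → ℝ)) stdG := (integrable_const (1:ℝ)).indicator hs
    have b2 : Integrable (fun x => s.indicator (1 : ℝ → ℝ) (-x)) stdG := by
      have := (MeasurableEquiv.neg ℝ).measurableEmbedding.integrable_map_iff
        (μ := stdG) (g := s.indicator (1 : ℝ → ℝ))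
      have e : stdG.map (MeasurableEquiv.neg ℝ) = stdG := map_neg_stdG
      rw [e] at this
      exact this.1 b1
    rw [← (int_nu hf hf01 b1 b2).2]
    refine integral_eq_zero_of_ae ?_
    filter_upwards [hz'] with t ht
    rw [Pi.zero_apply, Set.indicator_of_notMem]
    intro h; linarith [hst t h]
  rcases lt_trichotomy c₁ 0 with h | h | h
  · have h1 := (hnd (κ / c₁)).2
    have h2 := ind (Set.Ioi (κ / c₁)) measurableSet_Ioi (fun t ht => by
      have : κ / c₁ < t := ht
      rw [div_lt_iff_of_neg h] at this; nlinarith)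
    refine h1.ne' (Eq.trans ?_ h2)
    refine integral_congr_ae (ae_of_all _ fun g => ?_)
    simp [Set.indicator_apply]
  · subst h
    have h1 := (hnd 0).2
    have h2 := ind (Set.Ioi 0) measurableSet_Ioi (fun t ht => by simpa using hκ)
    refine h1.ne' (Eq.trans ?_ h2)
    refine integral_congr_ae (ae_of_all _ fun g => ?_)
    simp [Set.indicator_apply]
  · have h1 := (hnd (κ / c₁)).1
    have h2 := ind (Set.Iio (κ / c₁)) measurableSet_Iio (fun t ht => by
      have : t < κ / c₁ := ht
      rw [lt_div_iff₀ h] at this; nlinarith)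
    refine h1.ne' (Eq.trans ?_ h2)
    refine integral_congr_ae (ae_of_all _ fun g => ?_)
    simp [Set.indicator_apply]

lemma hasDeriv_of_bound {F : ℝ → ℝ} {c a K : ℝ}
    (h : ∀ d, F c + a * (d - c) ≤ F d ∧ F d ≤ F c + a * (d - c) + K * (d - c) ^ 2) :
    HasDerivAt F a c := by
  rw [hasDerivAt_iff_isLittleO]
  have h1 : (fun d => F d - F c - (d - c) • a) =O[𝓝 c] (fun d => (d - c) ^ 2) := by
    refine Asymptotics.IsBigO.of_bound K (Eventually.of_forall fun d => ?_)
    obtain ⟨u, v⟩ := h d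
    rw [Real.norm_eq_abs, Real.norm_eq_abs, abs_of_nonneg (sq_nonneg (d - c)), abs_of_nonneg]
    · simp only [smul_eq_mul]; linarith
    · simp only [smul_eq_mul]; linarith
  refine h1.trans_isLittleO ?_
  have h2 : Tendsto (fun d => d - c) (𝓝 c) (𝓝 0) := by
    have : ContinuousAt (fun d => d - c) c := by fun_prop
    simpa [ContinuousAt] using this
  exact (Asymptotics.isLittleO_pow_id (𝕜 := ℝ) (n := 2) (by norm_num)).comp_tendsto h2

lemma Fk_bound {f : ℝ → ℝ} (hf : Continuous f)
    (hf01 : ∀ x, f x ∈ Set.Icc (0:ℝ) 1) (hnd : NonDeg f) {κ : ℝ} (hκ : 0 < κ) (c₁ c₂ : ℝ) :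
    ∃ K : ℝ, 0 ≤ K ∧ ∀ d₁ d₂ : ℝ,
      Fk f κ c₁ c₂ + d1F f κ c₁ c₂ * (d₁ - c₁) + d2F f κ c₁ c₂ * (d₂ - c₂) ≤ Fk f κ d₁ d₂ ∧
      Fk f κ d₁ d₂ ≤ Fk f κ c₁ c₂ + d1F f κ c₁ c₂ * (d₁ - c₁) + d2F f κ c₁ c₂ * (d₂ - c₂)
        + K * ((d₁ - c₁) ^ 2 + (d₂ - c₂) ^ 2) := by
  have := nu_finite hf hf01
  obtain ⟨a₁, a₂, K, hK, h⟩ := Fa_bound (memT' hf hf01) (memZ' hf hf01) κ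
    (fun c₁ c₂ => Qa_pos hf hf01 hnd hκ c₁ c₂) c₁ c₂
  simp_rw [← Fk_eq hf hf01] at h
  have e1 : d1F f κ c₁ c₂ = a₁ :=
    (hasDeriv_of_bound (F := fun t => Fk f κ t c₂) (K := K) fun d => by
      have := h d c₂; simpa using this).deriv
  have e2 : d2F f κ c₁ c₂ = a₂ :=
    (hasDeriv_of_bound (F := fun t => Fk f κ c₁ t) (K := K) fun d => by
      have := h c₁ d; simpa using this).deriv
  rw [e1, e2]
  exact ⟨K, hK, h⟩

lemma Fk_pos {f : ℝ → ℝ} (hf : Continuous f)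
    (hf01 : ∀ x, f x ∈ Set.Icc (0:ℝ) 1) (hnd : NonDeg f) {κ : ℝ} (hκ : 0 < κ) (c₁ c₂ : ℝ) : 0 < Fk f κ c₁ c₂ := by
  rw [Fk_eq hf hf01]; exact Real.sqrt_pos.2 (Qa_pos hf hf01 hnd hκ c₁ c₂)

lemma Fk_continuous {f : ℝ → ℝ} (hf : Continuous f)
    (hf01 : ∀ x, f x ∈ Set.Icc (0:ℝ) 1) (hnd : NonDeg f) {κ : ℝ} (hκ : 0 < κ) :
    Continuous (fun c : ℝ × ℝ => Fk f κ c.1 c.2) := by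
  rw [continuous_iff_continuousAt]
  rintro ⟨c₁, c₂⟩
  obtain ⟨K, hK, h⟩ := Fk_bound hf hf01 hnd hκ c₁ c₂
  have l1 : ContinuousAt (fun c : ℝ × ℝ => Fk f κ c₁ c₂ + d1F f κ c₁ c₂ * (c.1 - c₁) + d2F f κ c₁ c₂ * (c.2 - c₂)) (c₁, c₂) := by fun_prop
  have l2 : ContinuousAt (fun c : ℝ × ℝ => Fk f κ c₁ c₂ + d1F f κ c₁ c₂ * (c.1 - c₁) + d2F f κ c₁ c₂ * (c.2 - c₂)
        + K * ((c.1 - c₁) ^ 2 + (c.2 - c₂) ^ 2)) (c₁, c₂) := by fun_prop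
  refine tendsto_of_tendsto_of_tendsto_of_le_of_le (g := fun c : ℝ × ℝ => Fk f κ c₁ c₂ + d1F f κ c₁ c₂ * (c.1 - c₁) + d2F f κ c₁ c₂ * (c.2 - c₂)) (h := fun c : ℝ × ℝ => Fk f κ c₁ c₂ + d1F f κ c₁ c₂ * (c.1 - c₁) + d2F f κ c₁ c₂ * (c.2 - c₂)
        + K * ((c.1 - c₁) ^ 2 + (c.2 - c₂) ^ 2)) ?_ ?_ (fun c => (h c.1 c.2).1) (fun c => (h c.1 c.2).2)
  · simpa [ContinuousAt] using l1
  · simpa [ContinuousAt] using l2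

lemma Fk_even {f : ℝ → ℝ} (κ c₁ c₂ : ℝ) : Fk f κ c₁ (-c₂) = Fk f κ c₁ c₂ := by
  unfold Fk
  congr 1
  refine integral_congr_ae (ae_of_all _ fun g => ?_)
  simp only
  rw [← integral_neg_stdG]
  simp

lemma d2F_zero {f : ℝ → ℝ} (κ c₁ : ℝ) : d2F f κ c₁ 0 = 0 := by
  unfold d2F
  have h1 : (fun t => Fk f κ c₁ t) = fun t => Fk f κ c₁ (-t) := by
    ext t; rw [Fk_even]
  have h2 := deriv_comp_neg (fun t => Fk f κ c₁ t) 0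
  rw [← h1, neg_zero] at h2
  linarith

lemma psiDown_le {f : ℝ → ℝ} (μ : Measure (ℝ × ℝ)) (κ ψ : ℝ) (hψ : 0 < ψ) (h : ψ ≤ psiDown f μ κ) :
    ψ ≤ psiStar0 f := by
  unfold psiDown at h
  have h1 : psiPlus f μ κ ≤ 0 := by
    unfold psiPlus
    split_ifs
    · exact le_rfl
    · rw [d2F_zero]; nlinarith [mul_nonneg (sq_nonneg (omegaMu μ)) (sq_nonneg (d1F f κ (zetaMu μ) 0))]
  have h2 : psiMinus f μ κ ≤ 0 := by
    unfold psiMinus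
    split_ifs
    · exact le_rfl
    · rw [d2F_zero]; nlinarith [mul_nonneg (sq_nonneg (omegaMu μ)) (sq_nonneg (d1F f κ (-zetaMu μ) 0))]
  rcases le_max_iff.1 h with h | h
  · rcases le_max_iff.1 h with h | h
    · exact h
    · linarith
  · linarith

lemma Fk_hom {f : ℝ → ℝ} (t c₁ c₂ : ℝ) (ht : 0 < t) : Fk f 0 (t * c₁) (t * c₂) = t * Fk f 0 c₁ c₂ := by
  unfold Fk
  have : ∀ x, max (t * x) 0 = t * max x 0 := fun x => by
    rw [mul_max_of_nonneg _ _ ht.le, mul_zero]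
  have e1 : ∀ g z, (f g * (max (0 - t * c₁ * g - t * c₂ * z) 0) ^ 2
      + (1 - f g) * (max (0 + t * c₁ * g - t * c₂ * z) 0) ^ 2)
      = t ^ 2 * (f g * (max (0 - c₁ * g - c₂ * z) 0) ^ 2
      + (1 - f g) * (max (0 + c₁ * g - c₂ * z) 0) ^ 2) := by
    intro g z
    rw [show 0 - t * c₁ * g - t * c₂ * z = t * (0 - c₁ * g - c₂ * z) by ring,
      show 0 + t * c₁ * g - t * c₂ * z = t * (0 + c₁ * g - c₂ * z) by ring, this, this]
    ring
  simp_rw [e1, integral_const_mul]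
  rw [Real.sqrt_mul (sq_nonneg t), Real.sqrt_sq ht.le]

lemma Fk_gt {f : ℝ → ℝ} (hf : Continuous f)
    (hf01 : ∀ x, f x ∈ Set.Icc (0:ℝ) 1) {κ : ℝ} (hκ : 0 < κ) (c₁ c₂ : ℝ) (h0 : 0 < Fk f 0 c₁ c₂) :
    Fk f 0 c₁ c₂ < Fk f κ c₁ c₂ := by
  have := nu_finite hf hf01
  rw [Fk_eq hf hf01] at h0 ⊢
  rw [Fk_eq hf hf01]
  have m0 := (memYp (memT' hf hf01) (memZ' hf hf01) 0 c₁ c₂)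
  have mk := (memYp (memT' hf hf01) (memZ' hf hf01) κ c₁ c₂)
  have i0 : Integrable (fun q : ℝ × ℝ => max (0 - c₁ * q.1 - c₂ * q.2) 0) ((nu f).prod stdG) :=
    m0.integrable (by norm_num)
  refine Real.sqrt_lt_sqrt (Real.sqrt_pos.1 h0).le ?_
  have h1 : Qa ((nu f).prod stdG) (fun q => q.1) (fun q => q.2) 0 c₁ c₂
      + 2 * κ * ∫ q : ℝ × ℝ, max (0 - c₁ * q.1 - c₂ * q.2) 0 ∂((nu f).prod stdG)
      ≤ Qa ((nu f).prod stdG) (fun q => q.1) (fun q => q.2) κ c₁ c₂ := by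
    unfold Qa
    rw [← integral_const_mul, ← integral_add m0.integrable_sq (i0.const_mul _)]
    refine integral_mono (m0.integrable_sq.add (i0.const_mul _)) mk.integrable_sq fun q => ?_
    have := (posPart_expand (0 - c₁ * q.1 - c₂ * q.2) κ).1
    rw [show 0 - c₁ * q.1 - c₂ * q.2 + κ = κ - c₁ * q.1 - c₂ * q.2 by ring] at this
    simp only [] at *
    linarith
  have h2 : 0 < ∫ q : ℝ × ℝ, max (0 - c₁ * q.1 - c₂ * q.2) 0 ∂((nu f).prod stdG) := by
    by_contra hcon
    have hz := le_antisymm (not_lt.1 hcon) (integral_nonneg fun _ => le_max_right _ _)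
    rw [integral_eq_zero_iff_of_nonneg (fun q => by simp) i0] at hz
    have : Qa ((nu f).prod stdG) (fun q => q.1) (fun q => q.2) 0 c₁ c₂ = 0 := by
      unfold Qa
      refine integral_eq_zero_of_ae ?_
      filter_upwards [hz] with q hq
      simp only [Pi.zero_apply] at hq ⊢
      rw [hq]; simp
    rw [this] at h0; simp at h0
  nlinarith [mul_pos hκ h2]

lemma memLp_four_pow {α : Type*} [MeasurableSpace α] {m : Measure α} [IsFiniteMeasure m]
    {X : α → ℝ} (hX : MemLp X 4 m) {k : ℕ} (hk : k ≤ 4) : Integrable (fun a => X a ^ k) m := by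
  have h1 : MemLp X (k : ENNReal) m := hX.mono_exponent (by exact_mod_cast hk)
  have h2 := h1.integrable_norm_pow'
  refine (integrable_norm_iff (hX.aestronglyMeasurable.pow k)).1 ?_
  simpa [norm_pow] using h2

lemma fourth_moment_add {α : Type*} [MeasurableSpace α] {m : Measure α} [IsProbabilityMeasure m]
    {S Y : α → ℝ} (hind : IndepFun S Y m) (hS : MemLp S 4 m) (hY : MemLp Y 4 m)
    (hS1 : ∫ a, S a ∂m = 0) (hY1 : ∫ a, Y a ∂m = 0) :
    ∫ a, (S a + Y a) ^ 2 ∂m = ∫ a, S a ^ 2 ∂m + ∫ a, Y a ^ 2 ∂m ∧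
    ∫ a, (S a + Y a) ^ 4 ∂m = ∫ a, S a ^ 4 ∂m + 6 * ((∫ a, S a ^ 2 ∂m) * (∫ a, Y a ^ 2 ∂m))
      + ∫ a, Y a ^ 4 ∂m := by
  have ind : ∀ k l : ℕ, IndepFun (fun a => S a ^ k) (fun a => Y a ^ l) m := fun k l =>
    hind.comp (φ := fun x : ℝ => x ^ k) (ψ := fun x : ℝ => x ^ l) (by fun_prop) (by fun_prop)
  have iS : ∀ k ≤ 4, Integrable (fun a => S a ^ k) m := fun k hk => memLp_four_pow hS hk
  have iY : ∀ k ≤ 4, Integrable (fun a => Y a ^ k) m := fun k hk => memLp_four_pow hY hk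
  have imul : ∀ k ≤ 4, ∀ l ≤ 4, Integrable (fun a => S a ^ k * Y a ^ l) m := fun k hk l hl =>
    (ind k l).integrable_mul (iS k hk) (iY l hl)
  have emul : ∀ k ≤ 4, ∀ l ≤ 4, ∫ a, S a ^ k * Y a ^ l ∂m = (∫ a, S a ^ k ∂m) * ∫ a, Y a ^ l ∂m :=
    fun k hk l hl => (ind k l).integral_fun_mul_eq_mul_integral
      (iS k hk).aestronglyMeasurable (iY l hl).aestronglyMeasurable
  have hS1' : ∫ a, S a ^ 1 ∂m = 0 := by simpa using hS1
  have hY1' : ∫ a, Y a ^ 1 ∂m = 0 := by simpa using hY1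
  constructor
  · have e : ∀ a, (S a + Y a) ^ 2 = S a ^ 2 + 2 * (S a ^ 1 * Y a ^ 1) + Y a ^ 2 := fun a => by ring
    simp_rw [e]
    have j1 : Integrable (fun a => S a ^ 2 + 2 * (S a ^ 1 * Y a ^ 1)) m :=
      (iS 2 (by norm_num)).add ((imul 1 (by norm_num) 1 (by norm_num)).const_mul _)
    rw [integral_add j1 (iY 2 (by norm_num)), integral_add (iS 2 (by norm_num))
      ((imul 1 (by norm_num) 1 (by norm_num)).const_mul _), integral_const_mul,
      emul 1 (by norm_num) 1 (by norm_num), hS1']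
    ring
  · have e : ∀ a, (S a + Y a) ^ 4 = S a ^ 4 + (4 * (S a ^ 3 * Y a ^ 1) + (6 * (S a ^ 2 * Y a ^ 2)
      + (4 * (S a ^ 1 * Y a ^ 3) + Y a ^ 4))) := fun a => by ring
    simp_rw [e]
    have q1 := (imul 1 (by norm_num) 3 (by norm_num)).const_mul 4
    have q2 := (imul 2 (by norm_num) 2 (by norm_num)).const_mul 6
    have q3 := (imul 3 (by norm_num) 1 (by norm_num)).const_mul 4
    have j1 : Integrable (fun a => 4 * (S a ^ 1 * Y a ^ 3) + Y a ^ 4) m := q1.add (iY 4 le_rfl)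
    have j2 : Integrable (fun a => 6 * (S a ^ 2 * Y a ^ 2)
      + (4 * (S a ^ 1 * Y a ^ 3) + Y a ^ 4)) m := q2.add j1
    have j3 : Integrable (fun a => 4 * (S a ^ 3 * Y a ^ 1) + (6 * (S a ^ 2 * Y a ^ 2)
      + (4 * (S a ^ 1 * Y a ^ 3) + Y a ^ 4))) m := q3.add j2
    rw [integral_add (iS 4 le_rfl) j3, integral_add q3 j2, integral_add q2 j1,
      integral_add q1 (iY 4 le_rfl), integral_const_mul, integral_const_mul, integral_const_mul,
      emul 1 (by norm_num) 3 (by norm_num), emul 2 (by norm_num) 2 (by norm_num),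
      emul 3 (by norm_num) 1 (by norm_num), hS1', hY1']
    ring

lemma fourth_moment {α ι : Type*} [MeasurableSpace α] {m : Measure α} [IsProbabilityMeasure m]
    [DecidableEq ι]
    (ξ : ι → α → ℝ) (hind : iIndepFun ξ m) (hmeas : ∀ i, Measurable (ξ i))
    (hmem : ∀ i, MemLp (ξ i) 4 m)
    (h1 : ∀ i, ∫ a, ξ i a ∂m = 0) (m2 K : ℝ) (b : ι → ℝ) (hb : ∀ i, 0 ≤ b i)
    (h2 : ∀ i, ∫ a, ξ i a ^ 2 ∂m = m2 * b i)
    (h4 : ∀ i, ∫ a, ξ i a ^ 4 ∂m ≤ K * b i ^ 2) (hm2 : m2 ^ 2 ≤ K) (s : Finset ι) :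
    MemLp (∑ i ∈ s, ξ i) 4 m ∧ ∫ a, (∑ i ∈ s, ξ i) a ∂m = 0 ∧
    ∫ a, (∑ i ∈ s, ξ i) a ^ 2 ∂m = m2 * ∑ i ∈ s, b i ∧
    ∫ a, (∑ i ∈ s, ξ i) a ^ 4 ∂m ≤ 3 * K * (∑ i ∈ s, b i) ^ 2 := by
  induction s using Finset.induction_on with
  | empty => simp
  | insert i s hi ih =>
    obtain ⟨a1, a2, a3, a4⟩ := ih
    have hI : IndepFun (∑ j ∈ s, ξ j) (ξ i) m := hind.indepFun_finsetSum_of_notMem hmeas hi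
    obtain ⟨e2, e4⟩ := fourth_moment_add hI a1 (hmem i) a2 (h1 i)
    have hsum : ∑ j ∈ insert i s, ξ j = (∑ j ∈ s, ξ j) + ξ i := by
      rw [Finset.sum_insert hi, add_comm]
    have hB : 0 ≤ ∑ j ∈ s, b j := Finset.sum_nonneg fun j _ => hb j
    rw [hsum, Finset.sum_insert hi]
    simp only [Pi.add_apply]
    refine ⟨a1.add (hmem i), ?_, ?_, ?_⟩
    · rw [integral_add (a1.integrable (by norm_num)) ((hmem i).integrable (by norm_num)), a2, h1 i]
      simp
    · rw [e2, a3, h2]; ring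
    · rw [e4, a3, h2]
      have := h4 i
      set B := ∑ j ∈ s, b j
      have hK : 0 ≤ K := (sq_nonneg _).trans hm2
      have h6 : 6 * (m2 * B * (m2 * b i)) ≤ 6 * (K * (B * b i)) := by
        have := mul_le_mul_of_nonneg_right hm2 (mul_nonneg hB (hb i))
        nlinarith
      nlinarith [mul_nonneg hK (sq_nonneg (b i))]

lemma pi_fourth (P : ℕ) (h : ℝ → ℝ) (hh : Measurable h) (hmem : MemLp h 4 stdG)
    (h0 : ∫ x, h x ∂stdG = 0) (K : ℝ) (hK4 : ∫ x, h x ^ 4 ∂stdG ≤ K)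
    (hK2 : (∫ x, h x ^ 2 ∂stdG) ^ 2 ≤ K) (a : Fin P → ℝ) :
    MemLp (fun x : Fin P → ℝ => ∑ j, a j * h (x j)) 4 (stdGaussianPi (Fin P)) ∧
    ∫ x, (∑ j, a j * h (x j)) ^ 4 ∂(stdGaussianPi (Fin P)) ≤ 3 * K * (∑ j, a j ^ 2) ^ 2 := by
  have hP : IsProbabilityMeasure (stdGaussianPi (Fin P)) := by unfold stdGaussianPi; infer_instance
  have hmp : ∀ j : Fin P, MeasurePreserving (fun x : Fin P → ℝ => x j) (stdGaussianPi (Fin P)) stdG :=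
    fun j => measurePreserving_eval (fun _ : Fin P => stdG) j
  have hintg : ∀ (j : Fin P) (φ : ℝ → ℝ), Measurable φ →
      ∫ x, φ (x j) ∂(stdGaussianPi (Fin P)) = ∫ x, φ x ∂stdG := fun j φ hφ => by
    rw [← (hmp j).map_eq, integral_map (hmp j).measurable.aemeasurable hφ.aestronglyMeasurable]
  have hmem' : ∀ j : Fin P, MemLp (fun x : Fin P → ℝ => h (x j)) 4 (stdGaussianPi (Fin P)) :=
    fun j => hmem.comp_measurePreserving (hmp j)
  have key := fourth_moment (m := stdGaussianPi (Fin P))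
    (fun (j : Fin P) (x : Fin P → ℝ) => a j * h (x j))
    (iIndepFun_pi (X := fun j y => a j * h y) (fun j => by fun_prop))
    (fun j => by fun_prop) (fun j => (hmem' j).const_mul _)
    (fun j => by rw [integral_const_mul, hintg j h hh, h0, mul_zero])
    (∫ x, h x ^ 2 ∂stdG) K (fun j => a j ^ 2) (fun j => sq_nonneg _)
    (fun j => by
      simp_rw [mul_pow]
      rw [integral_const_mul, hintg j (fun y => h y ^ 2) (by fun_prop)]; ring)
    (fun j => by
      simp_rw [mul_pow]
      rw [integral_const_mul, hintg j (fun y => h y ^ 4) (by fun_prop), ← pow_mul, mul_comm]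
      exact mul_le_mul_of_nonneg_right hK4 (by positivity)) hK2 Finset.univ
  have e : (∑ j, fun x : Fin P → ℝ => a j * h (x j)) = fun x => ∑ j, a j * h (x j) := by
    ext x; simp
  rw [e] at key
  exact ⟨key.1, key.2.2.2⟩

lemma summable_p {ψ : ℝ} (hψ : 0 < ψ) {p : ℕ → ℕ}
    (hp : Tendsto (fun n => (p n : ℝ) / (n : ℝ)) atTop (nhds ψ)) :
    Summable (fun n => ((p n : ℝ) ^ 2)⁻¹) := by
  have h1 : ∀ᶠ n in atTop, ψ / 2 < (p n : ℝ) / n := hp.eventually_const_lt (by linarith)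
  have h2 : Summable (fun n : ℕ => 4 / ψ ^ 2 * ((n : ℝ) ^ 2)⁻¹) :=
    (Real.summable_nat_pow_inv.2 (by norm_num)).mul_left _
  refine Summable.of_norm_bounded_eventually_nat h2 ?_
  filter_upwards [h1, eventually_gt_atTop 0] with n hn hn0
  have hn0' : (0:ℝ) < n := by exact_mod_cast hn0
  rw [lt_div_iff₀ hn0'] at hn
  have : 0 < ψ / 2 * n := by positivity
  rw [norm_inv, norm_pow, Real.norm_of_nonneg (by positivity)]
  calc ((p n : ℝ) ^ 2)⁻¹ ≤ ((ψ / 2 * n) ^ 2)⁻¹ := by gcongr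
    _ = _ := by field_simp; ring

lemma as_zero {ψ : ℝ} (hψ : 0 < ψ) {p : ℕ → ℕ}
    (hp : Tendsto (fun n => (p n : ℝ) / (n : ℝ)) atTop (nhds ψ))
    {Ω : Type*} [MeasureSpace Ω] [IsProbabilityMeasure (ℙ : Measure Ω)]
    {g : (n : ℕ) → Ω → Fin (p n) → ℝ}
    (hgmeas : ∀ n, Measurable (g n))
    (hglaw : ∀ n, Measure.map (g n) ℙ = stdGaussianPi (Fin (p n)))
    (h : ℝ → ℝ) (hh : Measurable h) (hmem : MemLp h 4 stdG) (h0 : ∫ x, h x ∂stdG = 0)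
    (a : (n : ℕ) → Fin (p n) → ℝ) (C : ℝ) (ha : ∀ n, ∑ j, a n j ^ 2 ≤ C / p n) :
    ∀ᵐ ω ∂(ℙ : Measure Ω), Tendsto (fun n => ∑ j, a n j * h (g n ω j)) atTop (𝓝 0) := by
  set K := max (∫ x, h x ^ 4 ∂stdG) ((∫ x, h x ^ 2 ∂stdG) ^ 2)
  have hK0 : 0 ≤ K := (sq_nonneg _).trans (le_max_right _ _)
  have hb : ∀ n, ∫⁻ ω, ENNReal.ofReal ((∑ j, a n j * h (g n ω j)) ^ 4) ∂(ℙ : Measure Ω)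
      ≤ ENNReal.ofReal (3 * K * C ^ 2 * ((p n : ℝ) ^ 2)⁻¹) := by
    intro n
    obtain ⟨k1, k2⟩ := pi_fourth (p n) h hh hmem h0 K (le_max_left _ _) (le_max_right _ _) (a n)
    have hP : IsProbabilityMeasure (stdGaussianPi (Fin (p n))) := by unfold stdGaussianPi; infer_instance
    have : ∫⁻ ω, ENNReal.ofReal ((∑ j, a n j * h (g n ω j)) ^ 4) ∂(ℙ : Measure Ω)
        = ∫⁻ x, ENNReal.ofReal ((∑ j, a n j * h (x j)) ^ 4) ∂(stdGaussianPi (Fin (p n))) := by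
      rw [← hglaw n, lintegral_map (by fun_prop) (hgmeas n)]
    rw [this, ← ofReal_integral_eq_lintegral_ofReal (memLp_four_pow k1 le_rfl)
      (ae_of_all _ fun x => by positivity)]
    refine ENNReal.ofReal_le_ofReal (k2.trans ?_)
    have hs : 0 ≤ ∑ j, a n j ^ 2 := Finset.sum_nonneg fun j _ => sq_nonneg _
    calc 3 * K * (∑ j, a n j ^ 2) ^ 2 ≤ 3 * K * (C / p n) ^ 2 := by
          have := ha n; gcongr
      _ = _ := by ring
  have hfin : ∫⁻ ω, ∑' n, ENNReal.ofReal ((∑ j, a n j * h (g n ω j)) ^ 4) ∂(ℙ : Measure Ω) ≠ ⊤ := by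
    rw [lintegral_tsum (fun n => by have := hgmeas n; fun_prop)]
    refine ne_top_of_le_ne_top ?_ (ENNReal.tsum_le_tsum hb)
    exact ((summable_p hψ hp).mul_left _).tsum_ofReal_ne_top
  have hae := ae_lt_top' (AEMeasurable.tsum fun n => by have := hgmeas n; fun_prop) hfin
  filter_upwards [hae] with ω hω
  have h1 := ENNReal.tendsto_atTop_zero_of_tsum_ne_top hω.ne
  have h2 : Tendsto (fun n => (∑ j, a n j * h (g n ω j)) ^ 4) atTop (𝓝 0) := by
    have := (ENNReal.tendsto_toReal ENNReal.zero_ne_top).comp h1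
    refine this.congr fun n => ?_
    simp only [Function.comp]
    rw [ENNReal.toReal_ofReal (by positivity)]
  have h3 := h2.sqrt.sqrt
  rw [Real.sqrt_zero, Real.sqrt_zero] at h3
  rw [tendsto_zero_iff_abs_tendsto_zero]
  refine h3.congr fun n => ?_
  simp only [Function.comp]
  rw [show ∀ x : ℝ, x ^ 4 = (x ^ 2) ^ 2 from fun x => by ring, Real.sqrt_sq (sq_nonneg _), Real.sqrt_sq_eq_abs]

lemma stdG_sq : ∫ x, x ^ 2 ∂stdG = 1 := by
  have h := variance_eq_integral (μ := stdG) (X := fun x : ℝ => x) (by fun_prop)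
  rw [integral_id_stdG] at h
  have h2 : Var[fun x : ℝ => x; stdG] = 1 := by
    unfold stdG; simpa using variance_fun_id_gaussianReal (μ := 0) (v := 1)
  rw [h2] at h
  simpa using h.symm

lemma memLp_sq_sub : MemLp (fun x : ℝ => x ^ 2 - 1) 4 stdG := by
  refine MemLp.sub ?_ (memLp_const 1)
  have h8 := (memLp_id_stdG 8 (by simp))
  have := h8.norm_rpow_div (2 : ENNReal)
  have e : (8 : ENNReal) / 2 = 4 := by
    rw [show (8 : ENNReal) = 4 * 2 by norm_num, ENNReal.mul_div_cancel_right (by simp) (by simp)]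
  rw [e] at this
  simpa using this

lemma as_lin {ψ : ℝ} (hψ : 0 < ψ) {p : ℕ → ℕ}
    (hp : Tendsto (fun n => (p n : ℝ) / (n : ℝ)) atTop (nhds ψ))
    {Ω : Type*} [MeasureSpace Ω] [IsProbabilityMeasure (ℙ : Measure Ω)]
    {g : (n : ℕ) → Ω → Fin (p n) → ℝ}
    (hgmeas : ∀ n, Measurable (g n))
    (hglaw : ∀ n, Measure.map (g n) ℙ = stdGaussianPi (Fin (p n)))
    {w : (n : ℕ) → Fin (p n) → ℝ} (hw : ∀ n, ∑ j, w n j ^ 2 = 1)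
    (β : (n : ℕ) → Fin (p n) → ℝ) (M : ℝ) (hβ : ∀ n j, |β n j| ≤ M) :
    ∀ᵐ ω ∂(ℙ : Measure Ω),
      Tendsto (fun n => ∑ j, (√(p n : ℝ))⁻¹ * (β n j * w n j) * g n ω j) atTop (𝓝 0) := by
  refine as_zero hψ hp hgmeas hglaw (fun x => x) measurable_id (memLp_id_stdG 4 (by simp))
    integral_id_stdG _ (M ^ 2) fun n => ?_
  have : ∀ j, ((√(p n : ℝ))⁻¹ * (β n j * w n j)) ^ 2 ≤ M ^ 2 / p n * w n j ^ 2 := fun j => by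
    rw [mul_pow, inv_pow, Real.sq_sqrt (by positivity), mul_pow]
    have : β n j ^ 2 ≤ M ^ 2 := sq_le_sq' (by linarith [abs_le.1 (hβ n j)]) (abs_le.1 (hβ n j)).2
    have h2 : (0:ℝ) ≤ (p n : ℝ)⁻¹ * w n j ^ 2 := by positivity
    calc _ = ((p n : ℝ)⁻¹ * w n j ^ 2) * β n j ^ 2 := by ring
      _ ≤ ((p n : ℝ)⁻¹ * w n j ^ 2) * M ^ 2 := by gcongr
      _ = _ := by ring
  calc _ ≤ ∑ j, M ^ 2 / p n * w n j ^ 2 := Finset.sum_le_sum fun j _ => this j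
    _ = _ := by rw [← Finset.mul_sum, hw, mul_one]

lemma as_quad {ψ : ℝ} (hψ : 0 < ψ) {p : ℕ → ℕ}
    (hp : Tendsto (fun n => (p n : ℝ) / (n : ℝ)) atTop (nhds ψ))
    {Ω : Type*} [MeasureSpace Ω] [IsProbabilityMeasure (ℙ : Measure Ω)]
    {g : (n : ℕ) → Ω → Fin (p n) → ℝ}
    (hgmeas : ∀ n, Measurable (g n))
    (hglaw : ∀ n, Measure.map (g n) ℙ = stdGaussianPi (Fin (p n)))
    (β : (n : ℕ) → Fin (p n) → ℝ) (M : ℝ) (hβ : ∀ n j, |β n j| ≤ M) :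
    ∀ᵐ ω ∂(ℙ : Measure Ω),
      Tendsto (fun n => ∑ j, (p n : ℝ)⁻¹ * β n j * (g n ω j ^ 2 - 1)) atTop (𝓝 0) := by
  refine as_zero hψ hp hgmeas hglaw (fun x => x ^ 2 - 1) (by fun_prop) memLp_sq_sub
    ?_ _ (M ^ 2) fun n => ?_
  · rw [integral_sub (memLp_id_stdG 2 (by simp)).integrable_sq (integrable_const _), stdG_sq]
    simp
  have : ∀ j, ((p n : ℝ)⁻¹ * β n j) ^ 2 ≤ ((p n : ℝ)⁻¹) ^ 2 * M ^ 2 := fun j => by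
    rw [mul_pow]
    have : β n j ^ 2 ≤ M ^ 2 := sq_le_sq' (by linarith [abs_le.1 (hβ n j)]) (abs_le.1 (hβ n j)).2
    gcongr
  calc _ ≤ ∑ j : Fin (p n), ((p n : ℝ)⁻¹) ^ 2 * M ^ 2 := Finset.sum_le_sum fun j _ => this j
    _ = _ := by
      simp only [Finset.sum_const, Finset.card_univ, Fintype.card_fin, nsmul_eq_mul]
      by_cases h : (p n : ℝ) = 0
      · simp [h]
      · field_simp

lemma integral_empMeas (P : ℕ) (pt : Fin P → ℝ × ℝ) (φ : ℝ × ℝ → ℝ) (hφ : StronglyMeasurable φ) :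
    ∫ q, φ q ∂(empMeas P pt) = (P : ℝ)⁻¹ * ∑ i, φ (pt i) := by
  unfold empMeas
  rw [integral_smul_measure, integral_finset_sum_measure]
  · simp [integral_dirac' _ _ hφ]
  · intro i _
    exact (integrable_dirac' hφ (by simp))

lemma bdd_ext {xmin xmax : ℝ} (hxx : xmin ≤ xmax) (φ : ℝ → ℝ) (hφ : ContinuousOn φ (Icc xmin xmax)) :
    ∃ φ' : ℝ → ℝ, Continuous φ' ∧ (∀ x ∈ Icc xmin xmax, φ' x = φ x) ∧ ∃ M, 0 ≤ M ∧ ∀ x, |φ' x| ≤ M := by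
  obtain ⟨M, hM⟩ := (isCompact_Icc (a := xmin) (b := xmax)).exists_bound_of_continuousOn hφ
  refine ⟨IccExtend hxx ((Icc xmin xmax).restrict φ), ?_, ?_, max M 0, le_max_right _ _, ?_⟩
  · exact (continuousOn_iff_continuous_restrict.1 hφ).Icc_extend'
  · intro x hx
    rw [IccExtend_of_mem _ _ hx]; rfl
  · intro x
    refine le_trans ?_ (le_max_left _ _)
    exact hM _ (projIcc xmin xmax hxx x).2

lemma det_one {p : ℕ → ℕ} {xmin xmax : ℝ} (hxx : xmin ≤ xmax)
    {Λ : (n : ℕ) → Fin (p n) → ℝ} (hΛ : ∀ n j, Λ n j ∈ Set.Icc xmin xmax)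
    {w : (n : ℕ) → Fin (p n) → ℝ}
    {μ : Measure (ℝ × ℝ)} [IsProbabilityMeasure μ]
    (hμsupp : ∀ᵐ q ∂μ, q.1 ∈ Set.Icc xmin xmax)
    (hweak : ∀ φ : BoundedContinuousFunction (ℝ × ℝ) ℝ,
      Tendsto (fun n => ∫ q, φ q
          ∂(empMeas (p n) (fun i => (Λ n i, Real.sqrt (p n : ℝ) * w n i))))
        atTop (nhds (∫ q, φ q ∂μ))) (φ : ℝ → ℝ) (hφ : ContinuousOn φ (Icc xmin xmax)) :
    Integrable (fun q : ℝ × ℝ => φ q.1) μ ∧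
    Tendsto (fun n => ∑ j, (p n : ℝ)⁻¹ * φ (Λ n j)) atTop (𝓝 (∫ q, φ q.1 ∂μ)) := by
  obtain ⟨φ', hc, he, M, hM0, hM⟩ := bdd_ext hxx φ hφ
  have hae : (fun q : ℝ × ℝ => φ' q.1) =ᵐ[μ] fun q => φ q.1 := by
    filter_upwards [hμsupp] with q hq using he _ hq
  have hi : Integrable (fun q : ℝ × ℝ => φ' q.1) μ :=
    Integrable.of_bound (C := M) (hc.comp continuous_fst).aestronglyMeasurable
      (ae_of_all _ fun q => hM _)
  refine ⟨hi.congr hae, ?_⟩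
  have := hweak (BoundedContinuousFunction.ofNormedAddCommGroup (fun q : ℝ × ℝ => φ' q.1)
    (hc.comp continuous_fst) M (fun q => hM _))
  simp only [BoundedContinuousFunction.coe_ofNormedAddCommGroup] at this
  rw [integral_congr_ae hae] at this
  refine this.congr fun n => ?_
  rw [integral_empMeas _ _ (fun q : ℝ × ℝ => φ' q.1) (hc.comp continuous_fst).stronglyMeasurable, Finset.mul_sum]
  exact Finset.sum_congr rfl fun j _ => by rw [he _ (hΛ n j)]

lemma det_lsc {p : ℕ → ℕ}
    {Λ : (n : ℕ) → Fin (p n) → ℝ}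
    {w : (n : ℕ) → Fin (p n) → ℝ}
    {μ : Measure (ℝ × ℝ)} [IsProbabilityMeasure μ]
    (hw : ∀ n, ∑ j, w n j ^ 2 = 1) (hμw2 : ∫ q, q.2 ^ 2 ∂μ = 1)
    (hweak : ∀ φ : BoundedContinuousFunction (ℝ × ℝ) ℝ,
      Tendsto (fun n => ∫ q, φ q
          ∂(empMeas (p n) (fun i => (Λ n i, Real.sqrt (p n : ℝ) * w n i))))
        atTop (nhds (∫ q, φ q ∂μ))) (φ : ℝ → ℝ) (hc : Continuous φ) (M : ℝ)
    (h0 : ∀ x, 0 ≤ φ x) (hM : ∀ x, φ x ≤ M) (ε : ℝ) (hε : 0 < ε) :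
    ∀ᶠ n in atTop, ∫ q, φ q.1 * q.2 ^ 2 ∂μ - ε < ∑ j, φ (Λ n j) * w n j ^ 2 := by
  have hw2 : Integrable (fun q : ℝ × ℝ => q.2 ^ 2) μ := by
    by_contra h; rw [integral_undef h] at hμw2; norm_num at hμw2
  have hM0 : 0 ≤ M := (h0 0).trans (hM 0)
  have hφw : Integrable (fun q : ℝ × ℝ => φ q.1 * q.2 ^ 2) μ :=
    hw2.bdd_mul (c := M) (hc.comp continuous_fst).aestronglyMeasurable
      (ae_of_all _ fun q => by
        rw [Real.norm_eq_abs]; rw [abs_of_nonneg (h0 _)]; exact hM _)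
  have hcK : ∀ K : ℕ, Continuous (fun q : ℝ × ℝ => φ q.1 * min (q.2 ^ 2) K) := fun K =>
    (hc.comp continuous_fst).mul ((continuous_snd.pow 2).min continuous_const)
  have hlim : Tendsto (fun K : ℕ => ∫ q : ℝ × ℝ, φ q.1 * min (q.2 ^ 2) K ∂μ) atTop
      (𝓝 (∫ q, φ q.1 * q.2 ^ 2 ∂μ)) := by
    refine tendsto_integral_of_dominated_convergence (fun q => φ q.1 * q.2 ^ 2)
      (fun K => (hcK K).aestronglyMeasurable) hφw (fun K => ae_of_all _ fun q => ?_)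
      (ae_of_all _ fun q => ?_)
    · rw [Real.norm_eq_abs, abs_of_nonneg (mul_nonneg (h0 _) (le_min (sq_nonneg _) (by positivity)))]
      exact mul_le_mul_of_nonneg_left (min_le_left _ _) (h0 _)
    · refine tendsto_const_nhds.congr' ?_
      obtain ⟨N, hN⟩ := exists_nat_ge (q.2 ^ 2)
      filter_upwards [eventually_ge_atTop N] with K hK
      rw [min_eq_left (hN.trans (by exact_mod_cast hK))]
  obtain ⟨K, hK⟩ := (hlim.eventually_const_lt (show ∫ q, φ q.1 * q.2 ^ 2 ∂μ - ε < _ by linarith)).exists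
  have hb : ∀ q : ℝ × ℝ, ‖φ q.1 * min (q.2 ^ 2) K‖ ≤ M * K := fun q => by
    rw [Real.norm_eq_abs, abs_of_nonneg (mul_nonneg (h0 _) (le_min (sq_nonneg _) (by positivity)))]
    exact mul_le_mul (hM _) (min_le_right _ _) (le_min (sq_nonneg _) (by positivity)) hM0
  have := hweak (BoundedContinuousFunction.ofNormedAddCommGroup _ (hcK K) _ hb)
  simp only [BoundedContinuousFunction.coe_ofNormedAddCommGroup] at this
  filter_upwards [this.eventually_const_lt hK] with n hn
  refine hn.trans_le ?_
  rw [integral_empMeas _ _ _ (hcK K).stronglyMeasurable, Finset.mul_sum]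
  refine Finset.sum_le_sum fun j _ => ?_
  have hp0 : (p n : ℝ) ≠ 0 := by
    have := Fin.pos j
    positivity
  have h1 : φ (Λ n j) * min ((√(p n : ℝ) * w n j) ^ 2) K ≤ φ (Λ n j) * (p n * w n j ^ 2) := by
    refine mul_le_mul_of_nonneg_left ((min_le_left _ _).trans ?_) (h0 _)
    rw [mul_pow, Real.sq_sqrt (by positivity)]
  calc _ ≤ (p n : ℝ)⁻¹ * (φ (Λ n j) * (p n * w n j ^ 2)) := by
        refine mul_le_mul_of_nonneg_left h1 (by positivity)
    _ = _ := by field_simp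

lemma det_two {p : ℕ → ℕ} {xmin xmax : ℝ} (hxx : xmin ≤ xmax)
    {Λ : (n : ℕ) → Fin (p n) → ℝ} (hΛ : ∀ n j, Λ n j ∈ Set.Icc xmin xmax)
    {w : (n : ℕ) → Fin (p n) → ℝ}
    {μ : Measure (ℝ × ℝ)} [IsProbabilityMeasure μ]
    (hμsupp : ∀ᵐ q ∂μ, q.1 ∈ Set.Icc xmin xmax)
    (hw : ∀ n, ∑ j, w n j ^ 2 = 1) (hμw2 : ∫ q, q.2 ^ 2 ∂μ = 1)
    (hweak : ∀ φ : BoundedContinuousFunction (ℝ × ℝ) ℝ,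
      Tendsto (fun n => ∫ q, φ q
          ∂(empMeas (p n) (fun i => (Λ n i, Real.sqrt (p n : ℝ) * w n i))))
        atTop (nhds (∫ q, φ q ∂μ))) (φ : ℝ → ℝ) (hφ : ContinuousOn φ (Icc xmin xmax)) :
    Integrable (fun q : ℝ × ℝ => φ q.1 * q.2 ^ 2) μ ∧
    Tendsto (fun n => ∑ j, φ (Λ n j) * w n j ^ 2) atTop (𝓝 (∫ q, φ q.1 * q.2 ^ 2 ∂μ)) := by
  obtain ⟨φ', hc, he, M, hM0, hM⟩ := bdd_ext hxx φ hφ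
  have hae : (fun q : ℝ × ℝ => φ' q.1 * q.2 ^ 2) =ᵐ[μ] fun q => φ q.1 * q.2 ^ 2 := by
    filter_upwards [hμsupp] with q hq; rw [he _ hq]
  have hw2 : Integrable (fun q : ℝ × ℝ => q.2 ^ 2) μ := by
    by_contra h; rw [integral_undef h] at hμw2; norm_num at hμw2
  have hφw : Integrable (fun q : ℝ × ℝ => φ' q.1 * q.2 ^ 2) μ :=
    hw2.bdd_mul (c := M) (hc.comp continuous_fst).aestronglyMeasurable
      (ae_of_all _ fun q => hM _)
  refine ⟨hφw.congr hae, ?_⟩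
  rw [← integral_congr_ae hae]
  have hs : ∀ n, ∑ j, φ (Λ n j) * w n j ^ 2 = ∑ j, φ' (Λ n j) * w n j ^ 2 := fun n =>
    Finset.sum_congr rfl fun j _ => by rw [he _ (hΛ n j)]
  simp_rw [hs]
  have up := det_lsc hw hμw2 hweak (fun x => M + φ' x) (continuous_const.add hc) (2 * M)
    (fun x => by linarith [abs_le.1 (hM x)]) (fun x => by linarith [(abs_le.1 (hM x)).2])
  have lo := det_lsc hw hμw2 hweak (fun x => M - φ' x) (continuous_const.sub hc) (2 * M)
    (fun x => by linarith [(abs_le.1 (hM x)).2]) (fun x => by linarith [(abs_le.1 (hM x)).1])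
  have e1 : ∫ q : ℝ × ℝ, (M + φ' q.1) * q.2 ^ 2 ∂μ = M + ∫ q, φ' q.1 * q.2 ^ 2 ∂μ := by
    simp_rw [add_mul]
    rw [integral_add (hw2.const_mul _) hφw, integral_const_mul, hμw2, mul_one]
  have e2 : ∫ q : ℝ × ℝ, (M - φ' q.1) * q.2 ^ 2 ∂μ = M - ∫ q, φ' q.1 * q.2 ^ 2 ∂μ := by
    simp_rw [sub_mul]
    rw [integral_sub (hw2.const_mul _) hφw, integral_const_mul, hμw2, mul_one]
  have s1 : ∀ n, ∑ j, (M + φ' (Λ n j)) * w n j ^ 2 = M + ∑ j, φ' (Λ n j) * w n j ^ 2 := fun n => by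
    simp_rw [add_mul]
    rw [Finset.sum_add_distrib, ← Finset.mul_sum, hw, mul_one]
  have s2 : ∀ n, ∑ j, (M - φ' (Λ n j)) * w n j ^ 2 = M - ∑ j, φ' (Λ n j) * w n j ^ 2 := fun n => by
    simp_rw [sub_mul]
    rw [Finset.sum_sub_distrib, ← Finset.mul_sum, hw, mul_one]
  simp_rw [e1, s1] at up
  simp_rw [e2, s2] at lo
  rw [Metric.tendsto_atTop']
  intro ε hε
  obtain ⟨N, hN⟩ := eventually_atTop.1 ((up ε hε).and (lo ε hε))
  refine ⟨N, fun n hn => ?_⟩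
  obtain ⟨a, b⟩ := hN n hn.le
  rw [Real.dist_eq, abs_lt]
  constructor <;> linarith

section fin
variable {ι : Type*} [Fintype ι]

lemma l2_eq_norm (v : ι → ℝ) : l2 v = ‖WithLp.toLp 2 v‖ := by
  rw [EuclideanSpace.norm_eq]; simp [l2]

lemma l2_nonneg (v : ι → ℝ) : 0 ≤ l2 v := Real.sqrt_nonneg _

lemma l2_sq (v : ι → ℝ) : l2 v ^ 2 = ∑ j, v j ^ 2 :=
  Real.sq_sqrt (Finset.sum_nonneg fun _ _ => sq_nonneg _)

lemma l2_le_iff (v : ι → ℝ) : l2 v ≤ 1 ↔ ∑ j, v j ^ 2 ≤ 1 := by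
  rw [← l2_sq]; constructor
  · intro h; nlinarith [l2_nonneg v]
  · intro h; nlinarith [l2_nonneg v]

lemma l2_add (v v' : ι → ℝ) : l2 (fun j => v j + v' j) ≤ l2 v + l2 v' := by
  simp only [l2_eq_norm]
  exact norm_add_le (WithLp.toLp 2 v) (WithLp.toLp 2 v')

lemma l2_smul (t : ℝ) (ht : 0 ≤ t) (v : ι → ℝ) : l2 (fun j => t * v j) = t * l2 v := by
  simp only [l2]
  simp_rw [mul_pow]
  rw [← Finset.mul_sum, Real.sqrt_mul (sq_nonneg _), Real.sqrt_sq ht]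

lemma cs (v v' : ι → ℝ) : |∑ j, v j * v' j| ≤ l2 v * l2 v' := by
  refine abs_le_of_sq_le_sq ?_ (mul_nonneg (l2_nonneg _) (l2_nonneg _))
  rw [mul_pow, l2_sq, l2_sq]
  exact Finset.sum_mul_sq_le_sq_mul_sq _ _ _

lemma projv_ip (w v v' : ι → ℝ) (hw : ∑ j, w j ^ 2 = 1) :
    ∑ j, projv w v j * projv w v' j = ∑ j, v j * v' j - (∑ j, w j * v j) * (∑ j, w j * v' j) := by
  unfold projv
  set a := ∑ j, w j * v j
  set a' := ∑ j, w j * v' j with ha'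
  have : ∀ j, (v j - a * w j) * (v' j - a' * w j) =
      v j * v' j - a' * (w j * v j) - a * (w j * v' j) + a * a' * w j ^ 2 := fun j => by ring
  simp_rw [this]
  rw [Finset.sum_add_distrib, Finset.sum_sub_distrib, Finset.sum_sub_distrib, ← Finset.mul_sum,
    ← Finset.mul_sum, ← Finset.mul_sum, hw]
  ring

lemma projv_sq (w v : ι → ℝ) (hw : ∑ j, w j ^ 2 = 1) :
    l2 (projv w v) ^ 2 = ∑ j, v j ^ 2 - (∑ j, w j * v j) ^ 2 := by
  have := projv_ip w v v hw
  rw [l2_sq]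
  simp only [← sq] at this
  exact this

lemma projv_g (w v g : ι → ℝ) :
    ∑ j, g j * projv w v j = ∑ j, g j * v j - (∑ j, w j * v j) * ∑ j, g j * w j := by
  unfold projv
  rw [Finset.mul_sum, ← Finset.sum_sub_distrib]
  exact Finset.sum_congr rfl fun j _ => by ring

lemma projv_comb (w v v' : ι → ℝ) (t t' : ℝ) :
    projv w (fun j => t * v j + t' * v' j) = fun j => t * projv w v j + t' * projv w v' j := by
  funext j
  unfold projv
  have : ∑ k, w k * (t * v k + t' * v' k) = t * ∑ k, w k * v k + t' * ∑ k, w k * v' k := by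
    rw [Finset.mul_sum, Finset.mul_sum, ← Finset.sum_add_distrib]
    exact Finset.sum_congr rfl fun j _ => by ring
  rw [this]; ring

lemma projv_le (w v : ι → ℝ) (hw : ∑ j, w j ^ 2 = 1) : l2 (projv w v) ≤ l2 v := by
  have := projv_sq w v hw
  rw [← l2_sq] at this
  exact le_of_sq_le_sq₀ (by nlinarith [sq_nonneg (∑ j, w j * v j)]) (l2_nonneg _)
where le_of_sq_le_sq₀ {a b : ℝ} (h : a ^ 2 ≤ b ^ 2) (hb : 0 ≤ b) : a ≤ b := abs_le_of_sq_le_sq' h hb |>.2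

lemma inner_le (w v : ι → ℝ) (hw : ∑ j, w j ^ 2 = 1) : |∑ j, w j * v j| ≤ l2 v := by
  have := cs w v
  have h : l2 w = 1 := by simp [l2, hw]
  rwa [h, one_mul] at this

lemma scale_le (Λ θ : ι → ℝ) (xmax : ℝ) (h0 : ∀ j, 0 ≤ Λ j) (h : ∀ j, Λ j ≤ xmax) (hx : 0 ≤ xmax) :
    l2 (fun j => √(Λ j) * θ j) ≤ √xmax * l2 θ := by
  rw [← l2_smul _ (Real.sqrt_nonneg _)]
  unfold l2
  refine Real.sqrt_le_sqrt (Finset.sum_le_sum fun j _ => ?_)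
  rw [mul_pow, mul_pow, Real.sq_sqrt (h0 j), Real.sq_sqrt hx]
  exact mul_le_mul_of_nonneg_right (h j) (sq_nonneg _)

lemma compact_ball : IsCompact {θ : ι → ℝ | l2 θ ≤ 1} := by
  refine Metric.isCompact_of_isClosed_isBounded ?_ ?_
  · refine isClosed_le ?_ continuous_const
    unfold l2
    fun_prop
  · refine (Metric.isBounded_closedBall (x := (0 : ι → ℝ)) (r := 1)).subset fun θ hθ => ?_
    rw [mem_closedBall_zero_iff, pi_norm_le_iff_of_nonneg zero_le_one]
    intro j
    rw [Real.norm_eq_abs, abs_le_one_iff_mul_self_le_one, ← sq]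
    have := (l2_le_iff θ).1 hθ
    exact (Finset.single_le_sum (f := fun j => θ j ^ 2) (fun _ _ => sq_nonneg _) (Finset.mem_univ j)).trans this

lemma mid_sq (x y : ι → ℝ) :
    ∑ j, ((1/2) * x j + (1/2) * y j) ^ 2 =
      (∑ j, x j ^ 2 + ∑ j, y j ^ 2) / 2 - (∑ j, (x j - y j) ^ 2) / 4 := by
  rw [← Finset.sum_add_distrib, Finset.sum_div, Finset.sum_div, ← Finset.sum_sub_distrib]
  exact Finset.sum_congr rfl fun j _ => by ring

end fin

lemma d2F_nonneg {f : ℝ → ℝ} (hf : Continuous f) (hf01 : ∀ x, f x ∈ Set.Icc (0:ℝ) 1)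
    (hnd : NonDeg f) {κ : ℝ} (hκ : 0 < κ) (c₁ c₂ : ℝ) (h : 0 ≤ c₂) : 0 ≤ d2F f κ c₁ c₂ := by
  rcases h.eq_or_lt with rfl | h
  · rw [d2F_zero]
  obtain ⟨K, hK, hb⟩ := Fk_bound hf hf01 hnd hκ c₁ c₂
  have := (hb c₁ (-c₂)).1
  rw [Fk_even] at this
  by_contra hc
  push Not at hc
  nlinarith

section obj
variable {f : ℝ → ℝ} {κ ψ : ℝ} {p : ℕ} {Λ w g : Fin p → ℝ}

/-- Convenient form of the objective. -/
lemma obj2_eq (θ : Fin p → ℝ) : obj2 p ψ κ f Λ w g θ =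
    (√ψ)⁻¹ * Fk f κ (∑ j, w j * (√(Λ j) * θ j)) (l2 (projv w fun j => √(Λ j) * θ j))
    + ((√(p : ℝ))⁻¹ * ∑ j, g j * (√(Λ j) * θ j)
      - ((√(p : ℝ))⁻¹ * ∑ j, g j * w j) * ∑ j, w j * (√(Λ j) * θ j)) := by
  unfold obj2
  rw [projv_g]
  have : ∑ j, √(Λ j) * w j * θ j = ∑ j, w j * (√(Λ j) * θ j) :=
    Finset.sum_congr rfl fun j _ => by ring
  rw [this]; ring

lemma obj2_cont (hf : Continuous f) (hf01 : ∀ x, f x ∈ Set.Icc (0:ℝ) 1)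
    (hnd : NonDeg f) (hκ : 0 < κ) : Continuous (obj2 p ψ κ f Λ w g) := by
  have h := Fk_continuous hf hf01 hnd hκ
  unfold obj2
  refine (continuous_const.mul (h.comp (f := fun θ : Fin p → ℝ =>
    ((∑ j, √(Λ j) * w j * θ j), (l2 (projv w fun j => √(Λ j) * θ j)))) ?_)).add ?_
  · unfold l2 projv; fun_prop
  · unfold projv; fun_prop

lemma obj2_convex (hf : Continuous f) (hf01 : ∀ x, f x ∈ Set.Icc (0:ℝ) 1)
    (hnd : NonDeg f) (hκ : 0 < κ) (x y : Fin p → ℝ) (t t' : ℝ) (ht : 0 ≤ t) (ht' : 0 ≤ t')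
    (htt : t + t' = 1) :
    obj2 p ψ κ f Λ w g (fun j => t * x j + t' * y j) ≤
      t * obj2 p ψ κ f Λ w g x + t' * obj2 p ψ κ f Λ w g y := by
  rw [obj2_eq, obj2_eq, obj2_eq]
  have e : (fun j => √(Λ j) * (t * x j + t' * y j)) =
      fun j => t * (√(Λ j) * x j) + t' * (√(Λ j) * y j) := by funext j; ring
  have lin : ∀ v : Fin p → ℝ, ∑ j, v j * (√(Λ j) * (t * x j + t' * y j)) =
      t * ∑ j, v j * (√(Λ j) * x j) + t' * ∑ j, v j * (√(Λ j) * y j) := fun v => by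
    rw [Finset.mul_sum, Finset.mul_sum, ← Finset.sum_add_distrib]
    exact Finset.sum_congr rfl fun j _ => by ring
  rw [lin, lin, e, projv_comb]
  set N := l2 fun j => t * projv w (fun j => √(Λ j) * x j) j + t' * projv w (fun j => √(Λ j) * y j) j
  set Nx := l2 (projv w (fun j => √(Λ j) * x j))
  set Ny := l2 (projv w (fun j => √(Λ j) * y j))
  have hN : N ≤ t * Nx + t' * Ny := by
    refine (l2_add _ _).trans ?_
    rw [l2_smul t ht, l2_smul t' ht']
  have hN0 : 0 ≤ N := l2_nonneg _
  set ax := ∑ j, w j * (√(Λ j) * x j)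
  set ay := ∑ j, w j * (√(Λ j) * y j)
  obtain ⟨K, hK, hb⟩ := Fk_bound hf hf01 hnd hκ (t * ax + t' * ay) N
  have h1 := (hb ax Nx).1
  have h2 := (hb ay Ny).1
  have hd := d2F_nonneg hf hf01 hnd hκ (t * ax + t' * ay) N hN0
  set F0 := Fk f κ (t * ax + t' * ay) N
  set d1 := d1F f κ (t * ax + t' * ay) N
  set d2 := d2F f κ (t * ax + t' * ay) N
  have h3 : F0 ≤ t * Fk f κ ax Nx + t' * Fk f κ ay Ny := by
    have a1 := mul_le_mul_of_nonneg_left h1 ht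
    have a2 := mul_le_mul_of_nonneg_left h2 ht'
    have a3 := mul_le_mul_of_nonneg_left hN hd
    have e' : t' = 1 - t := by linarith
    subst e'
    nlinarith
  have hr : 0 ≤ (√ψ)⁻¹ := by positivity
  have := mul_le_mul_of_nonneg_left h3 hr
  nlinarith

lemma exists_min (hf : Continuous f) (hf01 : ∀ x, f x ∈ Set.Icc (0:ℝ) 1)
    (hnd : NonDeg f) (hκ : 0 < κ) : ∃ θ : Fin p → ℝ, l2 θ ≤ 1 ∧ (∀ θ', l2 θ' ≤ 1 →
      obj2 p ψ κ f Λ w g θ ≤ obj2 p ψ κ f Λ w g θ') := by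
  obtain ⟨θ, h1, h2⟩ := (compact_ball (ι := Fin p)).exists_isMinOn ⟨0, by simp [l2]⟩
    (obj2_cont (ψ := ψ) (Λ := Λ) (w := w) (g := g) hf hf01 hnd hκ).continuousOn
  exact ⟨θ, h1, fun θ' h' => h2 h'⟩

lemma sInf_eq_min (θ : Fin p → ℝ) (h : l2 θ ≤ 1) (hm : ∀ θ', l2 θ' ≤ 1 →
      obj2 p ψ κ f Λ w g θ ≤ obj2 p ψ κ f Λ w g θ') :
    sInf (obj2 p ψ κ f Λ w g '' {θ : Fin p → ℝ | l2 θ ≤ 1}) = obj2 p ψ κ f Λ w g θ := by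
  refine IsLeast.csInf_eq ⟨⟨θ, h, rfl⟩, ?_⟩
  rintro _ ⟨θ', h', rfl⟩
  exact hm θ' h'

lemma unique_min (hf : Continuous f) (hf01 : ∀ x, f x ∈ Set.Icc (0:ℝ) 1)
    (hnd : NonDeg f) (hκ : 0 < κ) (z : Fin p → ℝ)
    (hz : obj2 p ψ κ f Λ w g z < sInf (obj2 p ψ κ f Λ w g '' {θ : Fin p → ℝ | l2 θ ≤ 1})) :
    ∃! θ : Fin p → ℝ, l2 θ ≤ 1 ∧ (∀ θ', l2 θ' ≤ 1 →
      obj2 p ψ κ f Λ w g θ ≤ obj2 p ψ κ f Λ w g θ') := by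
  obtain ⟨θ, h1, h2⟩ := exists_min (p := p) (ψ := ψ) (Λ := Λ) (w := w) (g := g) hf hf01 hnd hκ
  refine ⟨θ, ⟨h1, h2⟩, ?_⟩
  rintro y ⟨hy1, hy2⟩
  rw [sInf_eq_min θ h1 h2] at hz
  by_contra hne
  set m : Fin p → ℝ := fun j => (1/2) * θ j + (1/2) * y j with hm
  have hmlt : l2 m < 1 := by
    have hs : 0 < ∑ j, (θ j - y j) ^ 2 := by
      obtain ⟨j, hj⟩ := Function.ne_iff.1 hne
      refine Finset.sum_pos' (fun _ _ => sq_nonneg _) ⟨j, Finset.mem_univ _, ?_⟩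
      have : θ j - y j ≠ 0 := sub_ne_zero.2 (Ne.symm hj)
      positivity
    have e : l2 m ^ 2 < 1 := by
      rw [l2_sq, mid_sq]
      have := (l2_le_iff θ).1 h1
      have := (l2_le_iff y).1 hy1
      linarith
    nlinarith [l2_nonneg m]
  have hmle : obj2 p ψ κ f Λ w g m ≤ obj2 p ψ κ f Λ w g θ := by
    have := obj2_convex (ψ := ψ) (Λ := Λ) (w := w) (g := g) hf hf01 hnd hκ θ y (1/2) (1/2)
      (by norm_num) (by norm_num) (by norm_num)
    have := hy2 θ h1
    linarith
  set t : ℝ := (1 - l2 m) / (1 + l2 z) with ht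
  have hz0 := l2_nonneg z
  have ht0 : 0 < t := div_pos (by linarith) (by linarith)
  have ht1 : t ≤ 1 := by rw [ht, div_le_one (by linarith)]; linarith [l2_nonneg m]
  have htz : t * (1 + l2 z) = 1 - l2 m := by rw [ht]; field_simp
  have hc := obj2_convex (ψ := ψ) (Λ := Λ) (w := w) (g := g) hf hf01 hnd hκ m z (1-t) t
      (by linarith) ht0.le (by ring)
  have hn : l2 (fun j => (1-t) * m j + t * z j) ≤ 1 := by
    refine (l2_add _ _).trans ?_
    rw [l2_smul _ (by linarith), l2_smul _ ht0.le]
    nlinarith [l2_nonneg m]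
  have := h2 _ hn
  nlinarith

end obj

section core
variable {f : ℝ → ℝ} {κ ψ : ℝ} {p : ℕ} {Λ w g : Fin p → ℝ}

/-- The stationarity identity. -/
lemma star {b A s : ℝ} (hψ : 0 < ψ) (hΛ : ∀ j, 0 ≤ Λ j) (θs θ : Fin p → ℝ)
    (hs : ∀ j, (b * Λ j + √ψ * s) * θs j = -(√ψ * (√(p : ℝ))⁻¹ * g j + A * w j) * √(Λ j)) :
    (√(p : ℝ))⁻¹ * ∑ j, g j * (√(Λ j) * θ j) =
      - ((√ψ)⁻¹ * b * ∑ j, (√(Λ j) * θs j) * (√(Λ j) * θ j)) - s * ∑ j, θs j * θ j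
      - (√ψ)⁻¹ * A * ∑ j, w j * (√(Λ j) * θ j) := by
  have h0 : √ψ ≠ 0 := (Real.sqrt_pos.2 hψ).ne'
  have key : √ψ * ((√(p : ℝ))⁻¹ * ∑ j, g j * (√(Λ j) * θ j)) =
      - (b * ∑ j, (√(Λ j) * θs j) * (√(Λ j) * θ j)) - √ψ * s * ∑ j, θs j * θ j
      - A * ∑ j, w j * (√(Λ j) * θ j) := by
    simp only [Finset.mul_sum, ← Finset.sum_neg_distrib, ← Finset.sum_sub_distrib]
    refine Finset.sum_congr rfl fun j _ => ?_
    have h1 := Real.mul_self_sqrt (hΛ j)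
    have h2 := hs j
    calc _ = -(-(√ψ * (√(p : ℝ))⁻¹ * g j + A * w j) * √(Λ j)) * θ j - A * (w j * (√(Λ j) * θ j)) := by ring
      _ = -((b * (√(Λ j) * √(Λ j)) + √ψ * s) * θs j) * θ j - A * (w j * (√(Λ j) * θ j)) := by rw [← h2, h1]
      _ = _ := by ring
  calc _ = (√ψ)⁻¹ * (√ψ * ((√(p : ℝ))⁻¹ * ∑ j, g j * (√(Λ j) * θ j))) := by field_simp
    _ = _ := by rw [key]; field_simp

lemma core_lower {c₁ c₂ s d1 d2 xmax : ℝ} (hψ : 0 < ψ) (hc₂ : 0 < c₂) (hd2 : 0 ≤ d2)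
    (hx : 0 ≤ xmax) (hΛ : ∀ j, 0 ≤ Λ j) (hΛ' : ∀ j, Λ j ≤ xmax) (hw : ∑ j, w j ^ 2 = 1)
    (hgrad : ∀ x y, Fk f κ c₁ c₂ + d1 * (x - c₁) + d2 * (y - c₂) ≤ Fk f κ x y)
    (θs θ : Fin p → ℝ)
    (hs : ∀ j, (d2 / c₂ * Λ j + √ψ * s) * θs j =
      -(√ψ * (√(p : ℝ))⁻¹ * g j + (d1 - c₁ * (d2 / c₂)) * w j) * √(Λ j)) (hθ : l2 θ ≤ 1) :
    (√ψ)⁻¹ * (Fk f κ c₁ c₂ - c₁ * d1 - c₂ * d2) - s + s * (1 - ∑ j, θs j * θ j)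
      - ((√ψ)⁻¹ * (d2 / c₂) * √xmax * (|l2 (projv w fun j => √(Λ j) * θs j) - c₂|
        + |∑ j, w j * (√(Λ j) * θs j) - c₁|)
        + |(√(p : ℝ))⁻¹ * ∑ j, g j * w j| * √xmax) ≤ obj2 p ψ κ f Λ w g θ := by
  rw [obj2_eq, star hψ hΛ θs θ hs]
  have hsc : l2 (fun j => √(Λ j) * θ j) ≤ √xmax := by
    refine (scale_le Λ θ xmax hΛ hΛ' hx).trans ?_
    nlinarith [Real.sqrt_nonneg xmax]
  have hN' := (projv_le w (fun j => √(Λ j) * θ j) hw).trans hsc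
  have ha' := (inner_le w (fun j => √(Λ j) * θ j) hw).trans hsc
  have hip := projv_ip w (fun j => √(Λ j) * θs j) (fun j => √(Λ j) * θ j) hw
  have hcs := cs (projv w (fun j => √(Λ j) * θs j)) (projv w fun j => √(Λ j) * θ j)
  rw [hip] at hcs
  have hcs := (abs_le.1 hcs).2
  have hN0 := l2_nonneg (projv w (fun j => √(Λ j) * θ j))
  set N := l2 (projv w (fun j => √(Λ j) * θ j))
  set Ns := l2 (projv w (fun j => √(Λ j) * θs j))
  set a := ∑ j, w j * (√(Λ j) * θ j)
  set as := ∑ j, w j * (√(Λ j) * θs j)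
  set U := ∑ j, (√(Λ j) * θs j) * (√(Λ j) * θ j)
  set e := (√(p : ℝ))⁻¹ * ∑ j, g j * w j
  set I := ∑ j, θs j * θ j
  set b := d2 / c₂ with hb
  have hb0 : 0 ≤ b := by positivity
  have hbd : d2 = b * c₂ := by rw [hb]; field_simp
  have hr : 0 ≤ (√ψ)⁻¹ := by positivity
  set r := (√ψ)⁻¹
  set S := √xmax
  have g1 := hgrad a N
  set F := Fk f κ a N
  set F0 := Fk f κ c₁ c₂
  have m1 : e * a ≤ |e| * S := by
    refine (le_abs_self _).trans ?_
    rw [abs_mul]; gcongr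
  have m2 : (Ns - c₂) * N ≤ |Ns - c₂| * S :=
    (mul_le_mul_of_nonneg_right (le_abs_self _) hN0).trans (by gcongr)
  have m3 : (as - c₁) * a ≤ |as - c₁| * S := by
    refine (le_abs_self _).trans ?_
    rw [abs_mul]; gcongr
  have k1 : F0 - c₁ * d1 - c₂ * d2 - b * S * (|Ns - c₂| + |as - c₁|)
      ≤ F - b * U - (d1 - c₁ * b) * a := by
    have q1 := mul_le_mul_of_nonneg_left hcs hb0
    have q2 := mul_le_mul_of_nonneg_left m2 hb0
    have q3 := mul_le_mul_of_nonneg_left m3 hb0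
    rw [hbd] at g1 ⊢
    nlinarith
  have := mul_le_mul_of_nonneg_left k1 hr
  nlinarith

lemma dist_lower (x y : Fin p → ℝ) :
    ∑ j, (y j - x j) ^ 2 = ∑ j, y j ^ 2 + ∑ j, x j ^ 2 - 2 * ∑ j, x j * y j := by
  rw [Finset.mul_sum, ← Finset.sum_add_distrib, ← Finset.sum_sub_distrib]
  exact Finset.sum_congr rfl fun j _ => by ring

lemma obj2_scale (t : ℝ) (ht : 0 ≤ t) (θ : Fin p → ℝ) :
    obj2 p ψ κ f Λ w g (fun j => t * θ j) =
    (√ψ)⁻¹ * Fk f κ (t * ∑ j, w j * (√(Λ j) * θ j)) (t * l2 (projv w fun j => √(Λ j) * θ j))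
    + t * ((√(p : ℝ))⁻¹ * ∑ j, g j * (√(Λ j) * θ j)
      - ((√(p : ℝ))⁻¹ * ∑ j, g j * w j) * ∑ j, w j * (√(Λ j) * θ j)) := by
  rw [obj2_eq]
  have lin : ∀ v : Fin p → ℝ, ∑ j, v j * (√(Λ j) * (t * θ j)) =
      t * ∑ j, v j * (√(Λ j) * θ j) := fun v => by
    rw [Finset.mul_sum]
    exact Finset.sum_congr rfl fun j _ => by ring
  have e : (fun j => √(Λ j) * (t * θ j)) = fun j => t * (√(Λ j) * θ j) + 0 * 0 := by
    funext j; ring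
  rw [lin, lin, e, projv_comb w (fun j => √(Λ j) * θ j) (fun _ => 0)]
  simp only [zero_mul, add_zero]
  rw [l2_smul t ht]
  ring

end core

lemma Fk_tendsto {f : ℝ → ℝ} {κ : ℝ}
    (hf : Continuous f) (hf01 : ∀ x, f x ∈ Set.Icc (0:ℝ) 1) (hnd : NonDeg f) (hκ : 0 < κ)
    {x y : ℕ → ℝ} {a b : ℝ} (hx : Tendsto x atTop (𝓝 a)) (hy : Tendsto y atTop (𝓝 b)) :
    Tendsto (fun n => Fk f κ (x n) (y n)) atTop (𝓝 (Fk f κ a b)) := by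
  have h := Fk_continuous hf hf01 hnd hκ
  generalize Fk f κ = F at h ⊢
  exact (h.tendsto (a, b)).comp (hx.prodMk_nhds hy)

set_option maxHeartbeats 1000000 in
/-- Deterministic limit statement. -/
lemma det_limit {ψ κ : ℝ} (hψ : 0 < ψ) (hκ : 0 < κ) {f : ℝ → ℝ}
    (hf : Continuous f) (hf01 : ∀ x, f x ∈ Set.Icc (0:ℝ) 1) (hnd : NonDeg f)
    {p : ℕ → ℕ} {xmax : ℝ} (hx : 0 ≤ xmax)
    {Λ w g : (n : ℕ) → Fin (p n) → ℝ} (hΛ0 : ∀ n j, 0 ≤ Λ n j) (hΛ' : ∀ n j, Λ n j ≤ xmax)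
    (hw : ∀ n, ∑ j, w n j ^ 2 = 1)
    {c₁ c₂ s : ℝ} (hc₂ : 0 < c₂) (hs : 0 < s) (θs : (n : ℕ) → Fin (p n) → ℝ)
    (hst : ∀ n j, (d2F f κ c₁ c₂ / c₂ * Λ n j + √ψ * s) * θs n j =
      -(√ψ * (√(p n : ℝ))⁻¹ * g n j + (d1F f κ c₁ c₂ - c₁ * (d2F f κ c₁ c₂ / c₂)) * w n j)
        * √(Λ n j))
    (N1 : Tendsto (fun n => ∑ j, θs n j ^ 2) atTop (𝓝 1))
    (N2 : Tendsto (fun n => ∑ j, Λ n j * θs n j ^ 2) atTop (𝓝 (c₁ ^ 2 + c₂ ^ 2)))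
    (N3 : Tendsto (fun n => ∑ j, w n j * (√(Λ n j) * θs n j)) atTop (𝓝 c₁))
    (N5 : Tendsto (fun n => (√(p n : ℝ))⁻¹ * ∑ j, g n j * w n j) atTop (𝓝 0)) :
    Tendsto (fun n => sInf ((obj2 (p n) ψ κ f (Λ n) (w n) (g n)) ''
              {θ : Fin (p n) → ℝ | l2 θ ≤ 1})) atTop (nhds (Tval f ψ κ c₁ c₂ s))
        ∧ (∀ᶠ n in atTop, ∃! θ : Fin (p n) → ℝ,
            l2 θ ≤ 1 ∧ ∀ θ' : Fin (p n) → ℝ, l2 θ' ≤ 1 →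
              obj2 (p n) ψ κ f (Λ n) (w n) (g n) θ ≤ obj2 (p n) ψ κ f (Λ n) (w n) (g n) θ')
        ∧ (∀ θh : (n : ℕ) → Fin (p n) → ℝ,
            (∀ n, l2 (θh n) ≤ 1 ∧ ∀ θ' : Fin (p n) → ℝ, l2 θ' ≤ 1 →
              obj2 (p n) ψ κ f (Λ n) (w n) (g n) (θh n)
                ≤ obj2 (p n) ψ κ f (Λ n) (w n) (g n) θ') →
            Tendsto (fun n => ∑ j, Real.sqrt (Λ n j) * w n j * θh n j) atTop (nhds c₁)
              ∧ Tendsto (fun n => l2 (fun j => Real.sqrt (Λ n j) * θh n j)) atTop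
                  (nhds (Real.sqrt (c₁ ^ 2 + c₂ ^ 2)))) := by
  obtain ⟨K, hK, hb⟩ := Fk_bound hf hf01 hnd hκ c₁ c₂
  have hd2 := d2F_nonneg hf hf01 hnd hκ c₁ c₂ hc₂.le
  have hT : Tval f ψ κ c₁ c₂ s =
    (√ψ)⁻¹ * (Fk f κ c₁ c₂ - c₁ * d1F f κ c₁ c₂ - c₂ * d2F f κ c₁ c₂) - s := rfl
  set T := Tval f ψ κ c₁ c₂ s
  set d1 := d1F f κ c₁ c₂
  set d2 := d2F f κ c₁ c₂
  set F0 := Fk f κ c₁ c₂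
  set r := (√ψ)⁻¹ with hr
  have hr0 : 0 < r := inv_pos.2 (Real.sqrt_pos.2 hψ)
  set Ns : ℕ → ℝ := fun n => l2 (projv (w n) fun j => √(Λ n j) * θs n j) with hNs
  set as : ℕ → ℝ := fun n => ∑ j, w n j * (√(Λ n j) * θs n j) with has
  set e : ℕ → ℝ := fun n => (√(p n : ℝ))⁻¹ * ∑ j, g n j * w n j with he
  set Gs : ℕ → ℝ := fun n => (√(p n : ℝ))⁻¹ * ∑ j, g n j * (√(Λ n j) * θs n j) with hGs
  have husq : ∀ n (θ : Fin (p n) → ℝ), ∑ j, (√(Λ n j) * θ j) ^ 2 = ∑ j, Λ n j * θ j ^ 2 := fun n θ =>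
    Finset.sum_congr rfl fun j _ => by rw [mul_pow, Real.sq_sqrt (hΛ0 n j)]
  -- limit of Ns
  have N4 : Tendsto Ns atTop (𝓝 c₂) := by
    have h := (N2.sub (N3.pow 2)).sqrt
    rw [show c₁ ^ 2 + c₂ ^ 2 - c₁ ^ 2 = c₂ ^ 2 by ring, Real.sqrt_sq hc₂.le] at h
    refine h.congr fun n => ?_
    rw [← husq, ← projv_sq _ _ (hw n), Real.sqrt_sq (l2_nonneg _)]
  have N6 : Tendsto Gs atTop (𝓝 (-(r * (c₁ * d1 + c₂ * d2) + s))) := by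
    have e1 : ∀ n, Gs n = -(r * (d2 / c₂) * ∑ j, Λ n j * θs n j ^ 2) - s * ∑ j, θs n j ^ 2
        - r * (d1 - c₁ * (d2 / c₂)) * as n := fun n => by
      rw [hGs]
      simp only
      rw [star hψ (hΛ0 n) (θs n) (θs n) (hst n)]
      simp only [← sq]
      rw [husq]
    have h := (((N2.const_mul (r * (d2 / c₂))).neg).sub (N1.const_mul s)).sub
      (N3.const_mul (r * (d1 - c₁ * (d2 / c₂))))
    have e2 : -(r * (d2 / c₂) * (c₁ ^ 2 + c₂ ^ 2)) - s * 1 - r * (d1 - c₁ * (d2 / c₂)) * c₁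
        = -(r * (c₁ * d1 + c₂ * d2) + s) := by
      have : d2 / c₂ * c₂ = d2 := div_mul_cancel₀ _ hc₂.ne'
      linear_combination (-(r * c₂)) * this
    rw [e2] at h
    exact h.congr fun n => (e1 n).symm
  -- the scaled objective
  have N7 : ∀ (t : ℕ → ℝ) (t0 : ℝ), (∀ n, 0 ≤ t n) → Tendsto t atTop (𝓝 t0) →
      Tendsto (fun n => obj2 (p n) ψ κ f (Λ n) (w n) (g n) (fun j => t n * θs n j)) atTop
        (𝓝 (r * Fk f κ (t0 * c₁) (t0 * c₂) + t0 * (-(r * (c₁ * d1 + c₂ * d2) + s)))) := by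
    intro t t0 ht htt
    have h1 : Tendsto (fun n => Fk f κ (t n * as n) (t n * Ns n)) atTop
        (𝓝 (Fk f κ (t0 * c₁) (t0 * c₂))) :=
      Fk_tendsto hf hf01 hnd hκ (htt.mul N3) (htt.mul N4)
    have h2 := (h1.const_mul r).add (htt.mul (N6.sub (N5.mul N3)))
    rw [zero_mul, sub_zero] at h2
    refine h2.congr fun n => ?_
    rw [obj2_scale _ (ht n)]
  -- lower bound
  set η : ℕ → ℝ := fun n => r * (d2 / c₂) * √xmax * (|Ns n - c₂| + |as n - c₁|) + |e n| * √xmax with hη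
  have N8 : Tendsto η atTop (𝓝 0) := by
    have h1 : Tendsto (fun n => |Ns n - c₂|) atTop (𝓝 0) := by
      simpa using (N4.sub_const c₂).abs
    have h2 : Tendsto (fun n => |as n - c₁|) atTop (𝓝 0) := by
      simpa using (N3.sub_const c₁).abs
    have h3 : Tendsto (fun n => |e n|) atTop (𝓝 0) := by simpa using N5.abs
    simpa using ((h1.add h2).const_mul (r * (d2 / c₂) * √xmax)).add (h3.mul_const (√xmax))
  have low : ∀ n (θ : Fin (p n) → ℝ), l2 θ ≤ 1 →
      T + s / 2 * ∑ j, (θ j - θs n j) ^ 2 + s / 2 * (1 - ∑ j, θs n j ^ 2) - η n ≤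
        obj2 (p n) ψ κ f (Λ n) (w n) (g n) θ := by
    intro n θ hθ
    have h := core_lower (g := g n) (s := s) hψ hc₂ hd2 hx (hΛ0 n) (hΛ' n) (hw n)
      (fun x y => (hb x y).1) (θs n) θ (hst n) hθ
    refine le_trans ?_ h
    rw [dist_lower]
    have := (l2_le_iff θ).1 hθ
    have hE : T = r * (F0 - c₁ * d1 - c₂ * d2) - s := hT
    simp only [hη, hE, hNs, has, he]
    nlinarith
  -- a feasible scaling
  set t : ℕ → ℝ := fun n => (max 1 (l2 (θs n)))⁻¹ with ht
  have hl2 : Tendsto (fun n => l2 (θs n)) atTop (𝓝 1) := by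
    have := N1.sqrt; rwa [Real.sqrt_one] at this
  have htt : Tendsto t atTop (𝓝 1) := by
    have := (Tendsto.max (tendsto_const_nhds (x := (1:ℝ))) hl2).inv₀ (by simp)
    simpa using this
  have ht0 : ∀ n, 0 ≤ t n := fun n => by rw [ht]; positivity
  have htf : ∀ n, l2 (fun j => t n * θs n j) ≤ 1 := fun n => by
    rw [l2_smul _ (ht0 n)]
    simp only [ht]
    rw [inv_mul_le_iff₀ (by positivity), mul_one]
    exact le_max_right _ _
  have up := N7 t 1 ht0 htt
  have hTe : r * Fk f κ (1 * c₁) (1 * c₂) + 1 * (-(r * (c₁ * d1 + c₂ * d2) + s)) = T := by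
    rw [hT]; simp only [one_mul]; ring
  rw [hTe] at up
  -- minimizers
  have hex : ∀ n, ∃ θ : Fin (p n) → ℝ, l2 θ ≤ 1 ∧ (∀ θ', l2 θ' ≤ 1 →
      obj2 (p n) ψ κ f (Λ n) (w n) (g n) θ ≤ obj2 (p n) ψ κ f (Λ n) (w n) (g n) θ') := fun n =>
    exists_min hf hf01 hnd hκ
  choose θm hm1 hm2 using hex
  have hδ : Tendsto (fun n => s / 2 * (1 - ∑ j, θs n j ^ 2) - η n) atTop (𝓝 0) := by
    simpa using ((N1.const_sub 1).const_mul (s / 2)).sub N8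
  have lim1 : Tendsto (fun n => sInf ((obj2 (p n) ψ κ f (Λ n) (w n) (g n)) ''
              {θ : Fin (p n) → ℝ | l2 θ ≤ 1})) atTop (nhds T) := by
    have hl : Tendsto (fun n => T + (s / 2 * (1 - ∑ j, θs n j ^ 2) - η n)) atTop (𝓝 T) := by
      simpa using hδ.const_add T
    refine tendsto_of_tendsto_of_tendsto_of_le_of_le hl up (fun n => ?_) (fun n => ?_)
    · simp only
      rw [sInf_eq_min _ (hm1 n) (hm2 n)]
      refine le_trans ?_ (low n _ (hm1 n))
      have : 0 ≤ s / 2 * ∑ j, (θm n j - θs n j) ^ 2 :=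
        mul_nonneg (by positivity) (Finset.sum_nonneg fun _ _ => sq_nonneg _)
      linarith
    · simp only
      rw [sInf_eq_min _ (hm1 n) (hm2 n)]
      exact hm2 n _ (htf n)
  refine ⟨lim1, ?_, ?_⟩
  · -- uniqueness
    set C := r * (K * (c₁ ^ 2 + c₂ ^ 2)) with hC
    have hC0 : 0 ≤ C := by positivity
    set h : ℝ := s / (2 * (C + 1)) with hh
    have hh0 : 0 < h := by positivity
    have hCh : C * h < s := by
      rw [hh, mul_div_assoc', div_lt_iff₀ (by positivity)]; nlinarith
    have lim2 := N7 (fun _ => 1 + h) (1 + h) (fun _ => by positivity) tendsto_const_nhds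
    have hlt : r * Fk f κ ((1 + h) * c₁) ((1 + h) * c₂) + (1 + h) * (-(r * (c₁ * d1 + c₂ * d2) + s)) < T := by
      have h1 := mul_le_mul_of_nonneg_left (hb ((1 + h) * c₁) ((1 + h) * c₂)).2 hr0.le
      have hE : T = r * (F0 - c₁ * d1 - c₂ * d2) - s := hT
      have h2 : r * (F0 + d1 * ((1 + h) * c₁ - c₁) + d2 * ((1 + h) * c₂ - c₂) +
        K * (((1 + h) * c₁ - c₁) ^ 2 + ((1 + h) * c₂ - c₂) ^ 2)) =
         r * F0 + r * h * (c₁ * d1 + c₂ * d2) + C * h * h := by rw [hC]; ring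
      have h3 : C * h * h < s * h := mul_lt_mul_of_pos_right hCh hh0
      rw [h2] at h1
      rw [hE]
      nlinarith
    filter_upwards [lim2.eventually_lt lim1 hlt] with n hn
    exact unique_min hf hf01 hnd hκ _ hn
  · intro θh hθ
    have hdist : Tendsto (fun n => ∑ j, (θh n j - θs n j) ^ 2) atTop (𝓝 0) := by
      have hu : Tendsto (fun n => (2 / s) * (obj2 (p n) ψ κ f (Λ n) (w n) (g n) (fun j => t n * θs n j) - T
          - (s / 2 * (1 - ∑ j, θs n j ^ 2) - η n))) atTop (𝓝 0) := by
        simpa using ((up.sub_const T).sub hδ).const_mul (2 / s)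
      refine squeeze_zero (fun n => Finset.sum_nonneg fun _ _ => sq_nonneg _) (fun n => ?_) hu
      have h1 := low n _ (hθ n).1
      have h2 := (hθ n).2 _ (htf n)
      have h3 : s / 2 * ∑ j, (θh n j - θs n j) ^ 2 ≤
        (obj2 (p n) ψ κ f (Λ n) (w n) (g n) (fun j => t n * θs n j) - T
          - (s / 2 * (1 - ∑ j, θs n j ^ 2) - η n)) := by linarith
      calc _ = 2 / s * (s / 2 * ∑ j, (θh n j - θs n j) ^ 2) := by field_simp
        _ ≤ _ := mul_le_mul_of_nonneg_left h3 (by positivity)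
    have hdl : Tendsto (fun n => √xmax * l2 (fun j => θh n j - θs n j)) atTop (𝓝 0) := by
      simpa [l2] using (hdist.sqrt).const_mul (√xmax)
    have hud : ∀ n, l2 (fun j => √(Λ n j) * (θh n j - θs n j)) ≤ √xmax * l2 (fun j => θh n j - θs n j) :=
      fun n => scale_le (Λ n) _ xmax (hΛ0 n) (hΛ' n) hx
    constructor
    · have hz : Tendsto (fun n => ∑ j, w n j * (√(Λ n j) * (θh n j - θs n j))) atTop (𝓝 0) :=
        squeeze_zero_norm (fun n => (inner_le (w n) _ (hw n)).trans (hud n)) hdl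
      have := N3.add hz
      rw [add_zero] at this
      refine this.congr fun n => ?_
      simp only [has]
      rw [← Finset.sum_add_distrib]
      exact Finset.sum_congr rfl fun j _ => by ring
    · have hus : Tendsto (fun n => l2 (fun j => √(Λ n j) * θs n j)) atTop (𝓝 (√(c₁ ^ 2 + c₂ ^ 2))) := by
        refine N2.sqrt.congr fun n => ?_
        rw [← husq]; rfl
      have hz : Tendsto (fun n => l2 (fun j => √(Λ n j) * θh n j) - l2 (fun j => √(Λ n j) * θs n j))
          atTop (𝓝 0) := by
        refine squeeze_zero_norm (fun n => le_trans ?_ (hud n)) hdl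
        rw [l2_eq_norm, l2_eq_norm, l2_eq_norm, Real.norm_eq_abs]
        refine (abs_norm_sub_norm_le _ _).trans (le_of_eq ?_)
        rw [← WithLp.toLp_sub]
        congr 2
        funext j
        simp only [Pi.sub_apply]; ring
      have := hus.add hz
      simpa using this

lemma lim_both {ψ : ℝ} (hψ : 0 < ψ) {p : ℕ → ℕ}
    (hp : Tendsto (fun n => (p n : ℝ) / (n : ℝ)) atTop (nhds ψ))
    {xmin xmax : ℝ} (hxx : xmin ≤ xmax)
    {Λ : (n : ℕ) → Fin (p n) → ℝ} (hΛ : ∀ n j, Λ n j ∈ Set.Icc xmin xmax)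
    {w : (n : ℕ) → Fin (p n) → ℝ} (hw : ∀ n, ∑ j, w n j ^ 2 = 1)
    {μ : Measure (ℝ × ℝ)} [IsProbabilityMeasure μ]
    (hμsupp : ∀ᵐ q ∂μ, q.1 ∈ Set.Icc xmin xmax)
    (hμw2 : ∫ q, q.2 ^ 2 ∂μ = 1)
    (hweak : ∀ φ : BoundedContinuousFunction (ℝ × ℝ) ℝ,
      Tendsto (fun n => ∫ q, φ q
          ∂(empMeas (p n) (fun i => (Λ n i, Real.sqrt (p n : ℝ) * w n i))))
        atTop (nhds (∫ q, φ q ∂μ)))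
    {Ω : Type*} [MeasureSpace Ω] [IsProbabilityMeasure (ℙ : Measure Ω)]
    {g : (n : ℕ) → Ω → Fin (p n) → ℝ}
    (hgmeas : ∀ n, Measurable (g n))
    (hglaw : ∀ n, Measure.map (g n) ℙ = stdGaussianPi (Fin (p n)))
    (α A : ℝ) (φ : ℝ → ℝ) (hφ : ContinuousOn φ (Icc xmin xmax)) :
    ∀ᵐ ω ∂(ℙ : Measure Ω),
      Tendsto (fun n => ∑ j, φ (Λ n j) * (α * (√(p n : ℝ))⁻¹ * g n ω j + A * w n j) ^ 2) atTop
        (𝓝 (∫ q, (α ^ 2 * φ q.1 + A ^ 2 * (φ q.1 * q.2 ^ 2)) ∂μ)) ∧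
      Tendsto (fun n => ∑ j, φ (Λ n j) * w n j * (α * (√(p n : ℝ))⁻¹ * g n ω j + A * w n j)) atTop
        (𝓝 (∫ q, A * (φ q.1 * q.2 ^ 2) ∂μ)) := by
  obtain ⟨M, hM⟩ := (isCompact_Icc (a := xmin) (b := xmax)).exists_bound_of_continuousOn hφ
  have hβ : ∀ n j, |φ (Λ n j)| ≤ M := fun n j => hM _ (hΛ n j)
  obtain ⟨i1, t1⟩ := det_one hxx hΛ hμsupp hweak φ hφ
  obtain ⟨i2, t2⟩ := det_two hxx hΛ hμsupp hw hμw2 hweak φ hφ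
  filter_upwards [as_lin hψ hp hgmeas hglaw hw (fun n j => φ (Λ n j)) M hβ,
    as_quad hψ hp hgmeas hglaw (fun n j => φ (Λ n j)) M hβ] with ω h1 h2
  constructor
  · rw [integral_add (i1.const_mul _) (i2.const_mul _), integral_const_mul, integral_const_mul]
    have h := ((h2.const_mul (α ^ 2)).add (t1.const_mul (α ^ 2))).add
      ((h1.const_mul (2 * α * A)).add (t2.const_mul (A ^ 2)))
    rw [mul_zero, mul_zero, zero_add, zero_add] at h
    refine h.congr fun n => ?_
    simp only [Finset.mul_sum, ← Finset.sum_add_distrib]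
    refine Finset.sum_congr rfl fun j _ => ?_
    have hq : ((√(p n : ℝ))⁻¹) ^ 2 = (p n : ℝ)⁻¹ := by
      rw [inv_pow, Real.sq_sqrt (by positivity)]
    rw [← hq]; ring
  · rw [integral_const_mul]
    have h := (h1.const_mul α).add (t2.const_mul A)
    rw [mul_zero, zero_add] at h
    refine h.congr fun n => ?_
    simp only [Finset.mul_sum, ← Finset.sum_add_distrib]
    exact Finset.sum_congr rfl fun j _ => by ring

lemma part_b {ψ κ : ℝ} (hψ : 0 < ψ) (hκ : 0 < κ) {f : ℝ → ℝ}
    (hf : Continuous f) (hf01 : ∀ x, f x ∈ Set.Icc (0:ℝ) 1) (hnd : NonDeg f)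
    {p : ℕ → ℕ}
    (hp : Tendsto (fun n => (p n : ℝ) / (n : ℝ)) atTop (nhds ψ))
    {xmin xmax : ℝ} (hxmin : 0 < xmin) (hxx : xmin ≤ xmax)
    {Λ : (n : ℕ) → Fin (p n) → ℝ} (hΛ : ∀ n j, Λ n j ∈ Set.Icc xmin xmax)
    {w : (n : ℕ) → Fin (p n) → ℝ} (hw : ∀ n, ∑ j, w n j ^ 2 = 1)
    {μ : Measure (ℝ × ℝ)} [IsProbabilityMeasure μ]
    (hμsupp : ∀ᵐ q ∂μ, q.1 ∈ Set.Icc xmin xmax)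
    (hμw2 : ∫ q, q.2 ^ 2 ∂μ = 1)
    (hweak : ∀ φ : BoundedContinuousFunction (ℝ × ℝ) ℝ,
      Tendsto (fun n => ∫ q, φ q
          ∂(empMeas (p n) (fun i => (Λ n i, Real.sqrt (p n : ℝ) * w n i))))
        atTop (nhds (∫ q, φ q ∂μ)))
    {Ω : Type*} [MeasureSpace Ω] [IsProbabilityMeasure (ℙ : Measure Ω)]
    {g : (n : ℕ) → Ω → Fin (p n) → ℝ}
    (hgmeas : ∀ n, Measurable (g n))
    (hglaw : ∀ n, Measure.map (g n) ℙ = stdGaussianPi (Fin (p n)))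
    (c₁ c₂ s : ℝ) (hc₂ : 0 < c₂) (hs : 0 < s) (hsol : SolSysMu f μ ψ κ c₁ c₂ s) :
    ∀ᵐ ω ∂(ℙ : Measure Ω), ∃ θs : (n : ℕ) → Fin (p n) → ℝ,
    (∀ n j, (d2F f κ c₁ c₂ / c₂ * Λ n j + √ψ * s) * θs n j =
      -(√ψ * (√(p n : ℝ))⁻¹ * g n ω j + (d1F f κ c₁ c₂ - c₁ * (d2F f κ c₁ c₂ / c₂)) * w n j)
        * √(Λ n j)) ∧
    (Tendsto (fun n => ∑ j, θs n j ^ 2) atTop (𝓝 1)) ∧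
    (Tendsto (fun n => ∑ j, Λ n j * θs n j ^ 2) atTop (𝓝 (c₁ ^ 2 + c₂ ^ 2))) ∧
    (Tendsto (fun n => ∑ j, w n j * (√(Λ n j) * θs n j)) atTop (𝓝 c₁)) ∧
    (Tendsto (fun n => (√(p n : ℝ))⁻¹ * ∑ j, g n ω j * w n j) atTop (𝓝 0)) := by
  obtain ⟨e1, e2, e3⟩ := hsol
  have hd2 := d2F_nonneg hf hf01 hnd hκ c₁ c₂ hc₂.le
  set d1 := d1F f κ c₁ c₂
  set d2 := d2F f κ c₁ c₂
  set A := d1 - c₁ * c₂⁻¹ * d2 with hA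
  set D : ℝ → ℝ := fun x => c₂⁻¹ * d2 * √x + √ψ * s * (√x)⁻¹ with hD
  have hψ' : 0 < √ψ := Real.sqrt_pos.2 hψ
  have hDpos : ∀ x ∈ Icc xmin xmax, 0 < D x := fun x hx => by
    have : 0 < √x := Real.sqrt_pos.2 (hxmin.trans_le hx.1)
    have : 0 ≤ c₂⁻¹ * d2 * √x := by positivity
    have : 0 < √ψ * s * (√x)⁻¹ := by positivity
    simp only [hD]; linarith
  have hsc : ContinuousOn (fun x : ℝ => √x) (Icc xmin xmax) := Real.continuous_sqrt.continuousOn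
  have hDc : ContinuousOn D (Icc xmin xmax) :=
    (continuousOn_const.mul hsc).add (continuousOn_const.mul
      (hsc.inv₀ fun x hx => (Real.sqrt_pos.2 (hxmin.trans_le hx.1)).ne'))
  have hDi : ContinuousOn (fun x => (D x)⁻¹) (Icc xmin xmax) := hDc.inv₀ fun x hx => (hDpos x hx).ne'
  have L1 := lim_both hψ hp hxx hΛ hw hμsupp hμw2 hweak hgmeas hglaw (√ψ) A _ (hDi.pow 2)
  have L2 := lim_both hψ hp hxx hΛ hw hμsupp hμw2 hweak hgmeas hglaw (√ψ) A _
    (continuousOn_id.mul (hDi.pow 2))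
  have L3 := lim_both hψ hp hxx hΛ hw hμsupp hμw2 hweak hgmeas hglaw (√ψ) A _
    (hsc.mul hDi)
  have L5 := as_lin hψ hp hgmeas hglaw hw (fun _ _ => 1) 1 (by simp)
  filter_upwards [L1, L2, L3, L5] with ω l1 l2' l3 l5
  refine ⟨fun n j => -((D (Λ n j))⁻¹ * (√ψ * (√(p n : ℝ))⁻¹ * g n ω j + A * w n j)),
    fun n j => ?_, ?_, ?_, ?_, ?_⟩
  · have hl : 0 < √(Λ n j) := Real.sqrt_pos.2 (hxmin.trans_le (hΛ n j).1)
    have hdd : d2 / c₂ * Λ n j + √ψ * s = D (Λ n j) * √(Λ n j) := by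
      have h1 := Real.mul_self_sqrt (hxmin.le.trans (hΛ n j).1)
      calc _ = c₂⁻¹ * d2 * (√(Λ n j) * √(Λ n j)) + √ψ * s := by rw [h1]; ring
        _ = _ := by simp only [hD]; field_simp
    have hne := (hDpos _ (hΛ n j)).ne'
    rw [hdd, hA]
    field_simp
  · have h := l1.1
    rw [e3]
    refine (h.congr fun n => ?_).trans (le_of_eq ?_)
    · exact Finset.sum_congr rfl fun j _ => by simp only [Pi.pow_apply]; ring
    · congr 1
      refine integral_congr_ae (ae_of_all _ fun q => ?_)
      simp only [Pi.pow_apply, Real.sq_sqrt hψ.le, hD]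
      rw [div_eq_mul_inv, inv_pow]; ring
  · have h := l2'.1
    rw [e2]
    refine (h.congr fun n => ?_).trans (le_of_eq ?_)
    · exact Finset.sum_congr rfl fun j _ => by simp only [Pi.mul_apply, Pi.pow_apply, id]; ring
    · congr 1
      refine integral_congr_ae (ae_of_all _ fun q => ?_)
      simp only [Pi.mul_apply, Pi.pow_apply, id, Real.sq_sqrt hψ.le, hD]
      rw [div_eq_mul_inv, inv_pow]; ring
  · have h := l3.2.neg
    rw [← neg_neg c₁, e1]
    refine (h.congr fun n => ?_).trans (le_of_eq ?_)
    · rw [← Finset.sum_neg_distrib]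
      exact Finset.sum_congr rfl fun j _ => by simp only [Pi.mul_apply]; ring
    · congr 2
      refine integral_congr_ae (ae_of_all _ fun q => ?_)
      simp only [Pi.mul_apply, hD]
      rw [div_eq_mul_inv]; ring
  · refine l5.congr fun n => ?_
    rw [Finset.mul_sum]
    exact Finset.sum_congr rfl fun j _ => by ring

lemma cmin (F : ℝ → ℝ → ℝ) (hF : Continuous (fun c : ℝ × ℝ => F c.1 c.2)) (r S : ℝ) (hS0 : 0 ≤ S)
    (hpos : ∀ a b : ℝ, 0 ≤ b → 0 < r * F a b - b) :
    ∃ m, 0 < m ∧ ∀ a b, |a| ≤ S → 0 ≤ b → b ≤ S → m ≤ r * F a b - b := by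
  have hcomp : IsCompact (Icc (-S) S ×ˢ Icc 0 S) := isCompact_Icc.prod isCompact_Icc
  have hcont : Continuous (fun c : ℝ × ℝ => r * F c.1 c.2 - c.2) :=
    (continuous_const.mul hF).sub continuous_snd
  obtain ⟨c, hc, hmin⟩ := hcomp.exists_isMinOn
    ⟨(0, 0), ⟨⟨by simpa using hS0, hS0⟩, ⟨le_refl _, hS0⟩⟩⟩ hcont.continuousOn
  refine ⟨_, hpos c.1 c.2 hc.2.1, fun a b ha hb hb' => ?_⟩
  exact hmin (show (a, b) ∈ Icc (-S) S ×ˢ Icc 0 S from ⟨abs_le.1 ha, hb, hb'⟩)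

lemma part_a {ψ κ : ℝ} (hψ : 0 < ψ) (hκ : 0 < κ) {f : ℝ → ℝ}
    (hf : Continuous f) (hf01 : ∀ x, f x ∈ Set.Icc (0:ℝ) 1) (hnd : NonDeg f)
    (h : ψ ≤ psiStar0 f)
    {p : ℕ → ℕ} {xmax : ℝ} (hx : 0 ≤ xmax)
    {Λ w g : (n : ℕ) → Fin (p n) → ℝ} (hΛ0 : ∀ n j, 0 ≤ Λ n j) (hΛ' : ∀ n j, Λ n j ≤ xmax)
    (hw : ∀ n, ∑ j, w n j ^ 2 = 1)
    (hg : Tendsto (fun n => ∑ j, (p n : ℝ)⁻¹ * 1 * (g n j ^ 2 - 1)) atTop (𝓝 0)) :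
    0 < Filter.liminf (fun n =>
          sInf ((obj2 (p n) ψ κ f (Λ n) (w n) (g n)) '' {θ : Fin (p n) → ℝ | l2 θ ≤ 1})) atTop := by
  have hψ' : 0 < √ψ := Real.sqrt_pos.2 hψ
  have hpos : ∀ a b : ℝ, 0 ≤ b → 0 < (√ψ)⁻¹ * Fk f κ a b - b := by
    intro a b hb
    rcases hb.eq_or_lt with rfl | hb
    · rw [sub_zero]; exact mul_pos (inv_pos.2 hψ') (Fk_pos hf hf01 hnd hκ _ _)
    have h1 : √ψ ≤ Fk f 0 (a / b) 1 := by
      have : ψ ≤ Fk f 0 (a / b) 1 ^ 2 :=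
        h.trans (ciInf_le ⟨0, by rintro _ ⟨c, rfl⟩; positivity⟩ (a / b))
      exact Real.sqrt_le_iff.2 ⟨Real.sqrt_nonneg _, this⟩
    have h2 := Fk_hom (f := f) b (a / b) 1 hb
    rw [mul_div_cancel₀ _ hb.ne', mul_one] at h2
    have h3 : b * √ψ ≤ Fk f 0 a b := by rw [h2]; gcongr
    have h4 := Fk_gt hf hf01 hκ a b (lt_of_lt_of_le (by positivity) h3)
    have : b < (√ψ)⁻¹ * Fk f κ a b := by
      rw [inv_mul_eq_div, lt_div_iff₀ hψ']; linarith
    linarith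
  set S := √xmax with hS
  have hS0 : 0 ≤ S := Real.sqrt_nonneg _
  obtain ⟨m, hm0, hmin⟩ := cmin (Fk f κ) (Fk_continuous hf hf01 hnd hκ) _ S hS0 hpos
  have hp1 : ∀ n, 0 < p n := fun n => by
    rcases Nat.eq_zero_or_pos (p n) with h0 | h0
    · exfalso
      have := hw n
      have hE : IsEmpty (Fin (p n)) := by rw [h0]; infer_instance
      rw [Finset.univ_eq_empty, Finset.sum_empty] at this
      norm_num at this
    · exact h0
  set γ : ℕ → ℝ := fun n => (√(p n : ℝ))⁻¹ * l2 (g n) with hγ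
  have hγ1 : Tendsto γ atTop (𝓝 1) := by
    have h1 := (hg.add_const 1).sqrt
    rw [zero_add, Real.sqrt_one] at h1
    refine h1.congr fun n => ?_
    have hpn : (p n : ℝ) ≠ 0 := by have := hp1 n; positivity
    have : ∑ j, (p n : ℝ)⁻¹ * 1 * (g n j ^ 2 - 1) + 1 = (p n : ℝ)⁻¹ * ∑ j, g n j ^ 2 := by
      rw [← Finset.mul_sum, Finset.sum_sub_distrib]
      simp only [Finset.sum_const, Finset.card_univ, Fintype.card_fin, nsmul_eq_mul]
      field_simp; ring
    rw [this, Real.sqrt_mul (by positivity), Real.sqrt_inv]; rfl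
  have hbd : ∀ n (θ : Fin (p n) → ℝ), l2 θ ≤ 1 →
      m - S * |γ n - 1| ≤ obj2 (p n) ψ κ f (Λ n) (w n) (g n) θ := by
    intro n θ hθ
    have hsc : l2 (fun j => √(Λ n j) * θ j) ≤ S := by
      refine (scale_le (Λ n) θ xmax (hΛ0 n) (hΛ' n) hx).trans ?_
      nlinarith
    have hN' := (projv_le (w n) (fun j => √(Λ n j) * θ j) (hw n)).trans hsc
    have ha' := (inner_le (w n) (fun j => √(Λ n j) * θ j) (hw n)).trans hsc
    have ea : ∑ j, √(Λ n j) * w n j * θ j = ∑ j, w n j * (√(Λ n j) * θ j) :=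
      Finset.sum_congr rfl fun j _ => by ring
    have hcs := (abs_le.1 (cs (g n) (projv (w n) (fun j => √(Λ n j) * θ j)))).1
    have hN0 := l2_nonneg (projv (w n) (fun j => √(Λ n j) * θ j))
    unfold obj2
    rw [ea]
    set N := l2 (projv (w n) (fun j => √(Λ n j) * θ j))
    set a := ∑ j, w n j * (√(Λ n j) * θ j)
    have h1 : m ≤ (√ψ)⁻¹ * Fk f κ a N - N :=
      hmin a N ha' hN0 hN'
    have h2 := mul_le_mul_of_nonneg_left hcs (show 0 ≤ (√(p n : ℝ))⁻¹ by positivity)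
    have h3 : (√(p n : ℝ))⁻¹ * -(l2 (g n) * N) = -(γ n * N) := by rw [hγ]; ring
    rw [h3] at h2
    have h4 : (γ n - 1) * N ≤ |γ n - 1| * S :=
      (mul_le_mul_of_nonneg_right (le_abs_self _) hN0).trans (by gcongr)
    linarith
  have hne : ∀ n, ((obj2 (p n) ψ κ f (Λ n) (w n) (g n)) '' {θ : Fin (p n) → ℝ | l2 θ ≤ 1}).Nonempty :=
    fun n => ⟨_, 0, by simp [l2], rfl⟩
  have hev : ∀ᶠ n in atTop, m / 2 ≤
      sInf ((obj2 (p n) ψ κ f (Λ n) (w n) (g n)) '' {θ : Fin (p n) → ℝ | l2 θ ≤ 1}) := by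
    have hl : Tendsto (fun n => m - S * |γ n - 1|) atTop (𝓝 m) := by
      simpa using ((hγ1.sub_const 1).abs.const_mul S).const_sub m
    filter_upwards [hl.eventually_const_lt (show m / 2 < m by linarith)] with n hn
    refine le_csInf (hne n) ?_
    rintro _ ⟨θ, hθ, rfl⟩
    exact hn.le.trans (hbd n θ hθ)
  have hub : ∀ n, sInf ((obj2 (p n) ψ κ f (Λ n) (w n) (g n)) '' {θ : Fin (p n) → ℝ | l2 θ ≤ 1}) ≤
      (√ψ)⁻¹ * Fk f κ 0 0 := by
    intro n
    refine csInf_le ⟨m - S * |γ n - 1|, ?_⟩ ⟨0, by simp [l2], ?_⟩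
    · rintro _ ⟨θ, hθ, rfl⟩
      exact hbd n θ hθ
    · simp [obj2, projv, l2]
  refine lt_of_lt_of_le (half_pos hm0) (le_liminf_of_le ?_ hev)
  exact (isBoundedUnder_of ⟨_, hub⟩).isCoboundedUnder_ge

/-- Almost sure asymptotics of `ξ⁽²⁾_{n,ψ,κ}` and of its minimizer. -/
theorem statement_12 (ψ : ℝ) (hψ : 0 < ψ) (κ : ℝ) (hκ : 0 < κ)
    (f : ℝ → ℝ) (hf : Continuous f) (hf01 : ∀ x, f x ∈ Set.Icc (0:ℝ) 1)
    (ρ : ℝ) (hρ : 0 < ρ) (hnd : NonDeg (fun x => f (ρ * x)))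
    (p : ℕ → ℕ) (hp : Tendsto (fun n => (p n : ℝ) / (n : ℝ)) atTop (nhds ψ))
    (xmin xmax : ℝ) (hxmin : 0 < xmin) (hxx : xmin ≤ xmax)
    (Λ : (n : ℕ) → Fin (p n) → ℝ) (hΛ : ∀ n j, Λ n j ∈ Set.Icc xmin xmax)
    (w : (n : ℕ) → Fin (p n) → ℝ) (hwunit : ∀ n, l2 (w n) = 1)
    (μ : Measure (ℝ × ℝ)) [IsProbabilityMeasure μ]
    (hμsupp : ∀ᵐ q ∂μ, q.1 ∈ Set.Icc xmin xmax)
    (hμw2 : ∫ q, q.2 ^ 2 ∂μ = 1)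
    -- W₂ convergence of the empirical measures: weak convergence plus convergence of
    -- second moments
    (hweak : ∀ φ : BoundedContinuousFunction (ℝ × ℝ) ℝ,
      Tendsto (fun n => ∫ q, φ q
          ∂(empMeas (p n) (fun i => (Λ n i, Real.sqrt (p n : ℝ) * w n i))))
        atTop (nhds (∫ q, φ q ∂μ)))
    (hsecond : Tendsto (fun n => ∫ q, q.1 ^ 2 + q.2 ^ 2
          ∂(empMeas (p n) (fun i => (Λ n i, Real.sqrt (p n : ℝ) * w n i))))
        atTop (nhds (∫ q, q.1 ^ 2 + q.2 ^ 2 ∂μ)))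
    -- the Gaussian vectors, on a common probability space
    (Ω : Type*) [MeasureSpace Ω] [IsProbabilityMeasure (ℙ : Measure Ω)]
    (g : (n : ℕ) → Ω → Fin (p n) → ℝ)
    (hgmeas : ∀ n, Measurable (g n))
    (hglaw : ∀ n, Measure.map (g n) ℙ = stdGaussianPi (Fin (p n))) :
    -- (a)
    ((ψ ≤ psiDown (fun x => f (ρ * x)) μ κ) →
      ∀ᵐ ω ∂(ℙ : Measure Ω),
        0 < Filter.liminf (fun n =>
          sInf ((obj2 (p n) ψ κ (fun x => f (ρ * x)) (Λ n) (w n) (g n ω)) ''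
            {θ : Fin (p n) → ℝ | l2 θ ≤ 1})) atTop)
    -- (b)
    ∧ (psiDown (fun x => f (ρ * x)) μ κ < ψ →
      ∀ c₁ c₂ s : ℝ, 0 < c₂ → 0 < s → SolSysMu (fun x => f (ρ * x)) μ ψ κ c₁ c₂ s →
      ∀ᵐ ω ∂(ℙ : Measure Ω),
        Tendsto (fun n =>
            sInf ((obj2 (p n) ψ κ (fun x => f (ρ * x)) (Λ n) (w n) (g n ω)) ''
              {θ : Fin (p n) → ℝ | l2 θ ≤ 1})) atTop
          (nhds (Tval (fun x => f (ρ * x)) ψ κ c₁ c₂ s))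
        ∧ (∀ᶠ n in atTop, ∃! θ : Fin (p n) → ℝ,
            l2 θ ≤ 1 ∧ ∀ θ' : Fin (p n) → ℝ, l2 θ' ≤ 1 →
              obj2 (p n) ψ κ (fun x => f (ρ * x)) (Λ n) (w n) (g n ω) θ
                ≤ obj2 (p n) ψ κ (fun x => f (ρ * x)) (Λ n) (w n) (g n ω) θ')
        ∧ (∀ θh : (n : ℕ) → Fin (p n) → ℝ,
            (∀ n, l2 (θh n) ≤ 1 ∧ ∀ θ' : Fin (p n) → ℝ, l2 θ' ≤ 1 →
              obj2 (p n) ψ κ (fun x => f (ρ * x)) (Λ n) (w n) (g n ω) (θh n)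
                ≤ obj2 (p n) ψ κ (fun x => f (ρ * x)) (Λ n) (w n) (g n ω) θ') →
            Tendsto (fun n => ∑ j, Real.sqrt (Λ n j) * w n j * θh n j) atTop (nhds c₁)
              ∧ Tendsto (fun n => l2 (fun j => Real.sqrt (Λ n j) * θh n j)) atTop
                  (nhds (Real.sqrt (c₁ ^ 2 + c₂ ^ 2))))) := by
  have hfc : Continuous (fun x => f (ρ * x)) := by fun_prop
  have hfm : ∀ x, (fun x => f (ρ * x)) x ∈ Set.Icc (0:ℝ) 1 := fun x => hf01 _
  have hw : ∀ n, ∑ j, w n j ^ 2 = 1 := fun n => by rw [← l2_sq, hwunit]; norm_num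
  have hΛ0 : ∀ n j, 0 ≤ Λ n j := fun n j => hxmin.le.trans (hΛ n j).1
  have hx : 0 ≤ xmax := hxmin.le.trans hxx
  constructor
  · intro h
    have h' := psiDown_le μ κ ψ hψ h
    filter_upwards [as_quad hψ hp hgmeas hglaw (fun _ _ => 1) 1 (by simp)] with ω hω
    exact part_a hψ hκ hfc hfm hnd h' hx hΛ0 (fun n j => (hΛ n j).2) hw hω
  · intro _ c₁ c₂ s hc₂ hs hsol
    filter_upwards [part_b hψ hκ hfc hfm hnd hp hxmin hxx hΛ hw hμsupp hμw2 hweak hgmeas hglaw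
      c₁ c₂ s hc₂ hs hsol] with ω hω
    obtain ⟨θs, hst, N1, N2, N3, N5⟩ := hω
    exact det_limit hψ hκ hfc hfm hnd hx hΛ0 (fun n j => (hΛ n j).2) hw hc₂ hs θs hst N1 N2 N3 N5

end MaxMargin
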